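/- arXiv:1912.02369 — 9 statements merged into one kernel-verified Lean document; each statement's English description precedes it below -/
import Mathlib

section
/- Every discrete solvable subgroup G of GL(3,ℂ) is virtually triangularizable: there exist a finite-index subgroup H of G and a matrix τ ∈ GL(3,ℂ) such that τ h τ⁻¹ is an upper triangular matrix for every h ∈ H. -/
/-!
This is Mal'cev's theorem on solvable linear groups. Call a representation strongly
irreducible if no proper nonzero subspace is invariant under a finite-index subgroup. If a
representation is not strongly irreducible, pass to a finite-index subgroup and treat an invariant
subspace and the corresponding quotient separately; so it suffices to show that a solvable group
acts by scalars in a strongly irreducible representation.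

The tool for this is that a commuting family of operators has only finitely many nonzero common
eigenspaces. If the group permutes the family, it permutes these eigenspaces, so a finite-index
subgroup stabilizes each of them. Applied to the conjugates of an operator `T` which commutes with
all of them, it shows that `T` is a scalar, i.e. `T ∈ (⊥ : Subalgebra k (End k V))`. Now go up the
derived series: suppose `N` is normal and `ρ` is scalar on `⁅N, N⁆`. Then conjugation `ρ.linHom ρ`
by `N` is a commuting family on `End k V`, of which every `ρ x` with `x ∈ N` is a common
eigenvector. A finite-index subgroup `K` stabilizes its eigenspace, so for `g ∈ K` the operator
`ρ ⁅g, x⁆` commutes with `ρ N`, hence is a scalar. Therefore `ρ x` commutes with its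
`K`-conjugates, and is itself a scalar.
-/

open Module
open scoped commutatorElement

section CommonEigenspace

section CommRing

variable {ι R M : Type*} [CommRing R] [AddCommGroup M] [Module R M]

/-- The common eigenspace of a family `f` of endomorphisms for the family `χ` of eigenvalues; it is
`⊥` unless `χ` is a joint eigenvalue. -/
def commonEigenspace (f : ι → End R M) (χ : ι → R) : Submodule R M :=
  ⨅ i, (f i).eigenspace (χ i)

theorem mem_commonEigenspace {f : ι → End R M} {χ : ι → R} {v : M} :
    v ∈ commonEigenspace f χ ↔ ∀ i, f i v = χ i • v := by
  simp only [commonEigenspace, Submodule.mem_iInf, End.mem_eigenspace_iff]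

end CommRing

variable {ι k V : Type*} [Field k] [AddCommGroup V] [Module k V] [FiniteDimensional k V]

theorem finite_range_commonEigenspace {f : ι → End k V} (hf : ∀ i j, Commute (f i) (f j)) :
    (Set.range (commonEigenspace f)).Finite := by
  have hindep : iSupIndep (commonEigenspace f) :=
    (End.independent_iInf_maxGenEigenspace_of_forall_mapsTo f fun i j ↦
      End.mapsTo_maxGenEigenspace_of_comm (hf j i)).mono fun χ ↦
        iInf_mono fun i ↦ ((f i).genEigenspace (χ i)).monotone le_top
  have hfin := WellFoundedGT.finite_ne_bot_of_iSupIndep hindep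
  refine ((hfin.image (commonEigenspace f)).insert ⊥).subset ?_
  rintro _ ⟨χ, rfl⟩
  by_cases hχ : commonEigenspace f χ = ⊥
  · exact .inl hχ
  · exact .inr ⟨χ, hχ, rfl⟩

variable [IsAlgClosed k]

theorem exists_inf_eigenspace_ne_bot {T : End k V} {U : Submodule k V} (hU : U ≠ ⊥)
    (hT : U ≤ U.comap T) : ∃ c, U ⊓ T.eigenspace c ≠ ⊥ := by
  have : Nontrivial U := Submodule.nontrivial_iff_ne_bot.2 hU
  obtain ⟨c, hc⟩ := End.exists_eigenvalue (T.restrict hT)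
  obtain ⟨v, hv⟩ := hc.exists_hasEigenvector
  refine ⟨c, (Submodule.ne_bot_iff _).2 ⟨v, ⟨v.2, ?_⟩, fun h ↦ hv.2 (Subtype.ext h)⟩⟩
  exact End.mem_eigenspace_iff.2 (congrArg Subtype.val hv.apply_eq_smul)

theorem exists_commonEigenspace_ne_bot [Nontrivial V] {f : ι → End k V}
    (hf : ∀ i j, Commute (f i) (f j)) : ∃ χ, commonEigenspace f χ ≠ ⊥ := by
  obtain ⟨U, ⟨hU, hfU⟩, hmin⟩ := exists_minimal_of_wellFoundedLT
    (fun U : Submodule k V ↦ U ≠ ⊥ ∧ ∀ i, U ≤ U.comap (f i)) ⟨⊤, top_ne_bot, by simp⟩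
  have hscalar : ∀ i, ∃ c, U ≤ (f i).eigenspace c := fun i ↦ by
    obtain ⟨c, hc⟩ := exists_inf_eigenspace_ne_bot hU (hfU i)
    have hinv : ∀ j, U ⊓ (f i).eigenspace c ≤ (U ⊓ (f i).eigenspace c).comap (f j) :=
      fun j v hv ↦ ⟨hfU j hv.1, End.mapsTo_genEigenspace_of_comm (hf i j) c 1 hv.2⟩
    exact ⟨c, (hmin ⟨hc, hinv⟩ inf_le_left).trans inf_le_right⟩
  choose χ hχ using hscalar
  exact ⟨χ, ne_bot_of_le_ne_bot hU (le_iInf hχ)⟩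

end CommonEigenspace

section Conjugation

variable {R G M : Type*} [CommSemiring R] [Group G] [AddCommMonoid M] [Module R M]
  (ρ : Representation R G M)

theorem linHom_mul_apply (g : G) (S T : End R M) :
    ρ.linHom ρ g (S * T) = ρ.linHom ρ g S * ρ.linHom ρ g T := by
  ext v
  simp

theorem linHom_apply_eq_map_conj (g x : G) : ρ.linHom ρ g (ρ x) = ρ (g * x * g⁻¹) := by
  simp only [Representation.linHom_apply, map_mul, mul_assoc, Module.End.mul_eq_comp]

theorem linHom_apply_mul (g : G) (T : End R M) : ρ.linHom ρ g T * ρ g = ρ g * T := by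
  ext v
  simp

theorem linHom_eq_one_of_mem_bot {g : G} (hg : ρ g ∈ (⊥ : Subalgebra R (End R M))) :
    ρ.linHom ρ g = 1 := by
  obtain ⟨c, hc⟩ := Algebra.mem_bot.1 hg
  refine LinearMap.ext fun T ↦ (ρ.asGroupHom g).isUnit.mul_right_cancel ?_
  rw [Representation.asGroupHom_apply, linHom_apply_mul, ← hc, Algebra.commutes,
    Module.End.one_apply]

theorem linHom_apply_eq_map_commutatorElement_mul (g x : G) :
    ρ.linHom ρ g (ρ x) = ρ ⁅g, x⁆ * ρ x := by
  rw [linHom_apply_eq_map_conj, ← map_mul, commutatorElement_def, inv_mul_cancel_right]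

theorem commute_linHom_of_map_commutatorElement_mem_bot {g h : G}
    (hgh : ρ ⁅g, h⁆ ∈ (⊥ : Subalgebra R (End R M))) : Commute (ρ.linHom ρ g) (ρ.linHom ρ h) := by
  have hmul : g * h = ⁅g, h⁆ * (h * g) := by
    rw [commutatorElement_def]
    group
  rw [commute_iff_eq, ← map_mul, hmul, map_mul, linHom_eq_one_of_mem_bot ρ hgh, one_mul, map_mul]

theorem commute_map_of_linHom_apply_eq_smul {g : G} {S T : End R M} (hT : IsUnit T) {c : R}
    (hcT : ρ.linHom ρ g T = c • T) (hcST : ρ.linHom ρ g (S * T) = c • (S * T)) :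
    Commute S (ρ g) := by
  refine hT.mul_right_cancel ?_
  calc S * ρ g * T
      = S * (c • T * ρ g) := by rw [mul_assoc, ← linHom_apply_mul, hcT]
    _ = c • (S * T) * ρ g := by rw [← mul_assoc, mul_smul_comm]
    _ = ρ g * S * T := by rw [← hcST, linHom_apply_mul, mul_assoc]

theorem commute_linHom_of_commute_conj {T : End R M}
    (hT : ∀ g, Commute T (ρ.linHom ρ g T)) (g h : G) :
    Commute (ρ.linHom ρ g T) (ρ.linHom ρ h T) := by
  have hh : ρ.linHom ρ h T = ρ.linHom ρ g (ρ.linHom ρ (g⁻¹ * h) T) := by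
    rw [← Module.End.mul_apply, ← map_mul, mul_inv_cancel_left]
  rw [hh, commute_iff_eq, ← linHom_mul_apply, (hT _).eq, linHom_mul_apply]

end Conjugation

section StronglyIrreducible

section CommRing

variable {R G M : Type*} [CommRing R] [Group G] [AddCommGroup M] [Module R M]

/-- A submodule is virtually invariant if some finite-index subgroup leaves it invariant. -/
def IsVirtuallyInvariant (ρ : Representation R G M) (U : Submodule R M) : Prop :=
  ∃ H : Subgroup G, H.FiniteIndex ∧ ∀ h ∈ H, U ≤ U.comap (ρ h)

/-- A nonzero representation is strongly irreducible if its restriction to every finite-index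
subgroup is irreducible. -/
def IsStronglyIrreducible (ρ : Representation R G M) : Prop :=
  Nontrivial M ∧ ∀ U, IsVirtuallyInvariant ρ U → U = ⊥ ∨ U = ⊤

theorem finiteIndex_map_subtype {H : Subgroup G} (hH : H.FiniteIndex) {K : Subgroup H}
    (hK : K.FiniteIndex) : (K.map H.subtype).FiniteIndex :=
  ⟨Subgroup.index_map_subtype K ▸ mul_ne_zero hK.index_ne_zero hH.index_ne_zero⟩

variable {ρ : Representation R G M}

theorem IsVirtuallyInvariant.of_restrict {H : Subgroup G} (hH : H.FiniteIndex) {U : Submodule R M}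
    (hU : IsVirtuallyInvariant (ρ.comp H.subtype) U) : IsVirtuallyInvariant ρ U := by
  obtain ⟨K, hK, hKU⟩ := hU
  refine ⟨K.map H.subtype, finiteIndex_map_subtype hH hK, ?_⟩
  rintro _ ⟨h, hh, rfl⟩
  exact hKU h hh

theorem IsStronglyIrreducible.restrict (hρ : IsStronglyIrreducible ρ) {H : Subgroup G}
    (hH : H.FiniteIndex) : IsStronglyIrreducible (ρ.comp H.subtype) :=
  ⟨hρ.1, fun U hU ↦ hρ.2 U (hU.of_restrict hH)⟩

theorem isVirtuallyInvariant_of_finite_of_comap_mem {S : Set (Submodule R M)} (hfin : S.Finite)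
    (hS : ∀ g, ∀ U ∈ S, U.comap (ρ g) ∈ S) {U : Submodule R M} (hU : U ∈ S) :
    IsVirtuallyInvariant ρ U := by
  let _ : MulAction G (Submodule R M) :=
    { smul g W := W.comap (ρ g⁻¹)
      one_smul W := by
        change W.comap (ρ 1⁻¹) = W
        rw [inv_one, map_one, Module.End.one_eq_id, Submodule.comap_id]
      mul_smul g h W := by
        change W.comap (ρ (g * h)⁻¹) = (W.comap (ρ h⁻¹)).comap (ρ g⁻¹)
        rw [mul_inv_rev, map_mul, Module.End.mul_eq_comp, Submodule.comap_comp] }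
  have horbit : (MulAction.orbit G U).Finite := by
    refine hfin.subset ?_
    rintro _ ⟨g, rfl⟩
    exact hS g⁻¹ U hU
  refine ⟨MulAction.stabilizer G U, ⟨?_⟩, fun h hh ↦ ?_⟩
  · rw [MulAction.index_stabilizer]
    exact Set.ncard_ne_zero_of_mem (MulAction.mem_orbit_self U) horbit
  · have hfix : U.comap (ρ h⁻¹⁻¹) = U := inv_mem hh
    rw [inv_inv] at hfix
    exact hfix.ge

theorem comap_commonEigenspace {ι : Type*} {f : ι → End R M} {g : G} {e : Equiv.Perm ι}
    (he : ∀ i, ρ g * f i = f (e i) * ρ g) (χ : ι → R) :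
    (commonEigenspace f χ).comap (ρ g) = commonEigenspace f (χ ∘ e) := by
  ext v
  have hiff : ∀ i, f (e i) (ρ g v) = χ (e i) • ρ g v ↔ f i v = χ (e i) • v := fun i ↦ by
    rw [← Module.End.mul_apply, ← he i, Module.End.mul_apply, ← map_smul,
      (ρ.apply_bijective g).injective.eq_iff]
  simp only [Submodule.mem_comap, mem_commonEigenspace, Function.comp_apply, ← hiff,
    e.forall_congr_right (q := fun i ↦ f i (ρ g v) = χ i • ρ g v)]

end CommRing

variable {k G V : Type*} [Field k] [Group G] [AddCommGroup V] [Module k V] [FiniteDimensional k V]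
  {ρ : Representation k G V}

theorem isVirtuallyInvariant_commonEigenspace {ι : Type*} {f : ι → End k V}
    (hcomm : ∀ i j, Commute (f i) (f j))
    (hperm : ∀ g, ∃ e : Equiv.Perm ι, ∀ i, ρ g * f i = f (e i) * ρ g) (χ : ι → k) :
    IsVirtuallyInvariant ρ (commonEigenspace f χ) := by
  refine isVirtuallyInvariant_of_finite_of_comap_mem (finite_range_commonEigenspace hcomm) ?_
    (Set.mem_range_self χ)
  rintro g _ ⟨ψ, rfl⟩
  obtain ⟨e, he⟩ := hperm g
  exact ⟨ψ ∘ e, (comap_commonEigenspace he ψ).symm⟩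

theorem exists_finiteIndex_commute_map_commutatorElement {N : Subgroup G} [N.Normal]
    (hN : ∀ x ∈ ⁅N, N⁆, ρ x ∈ (⊥ : Subalgebra k (End k V))) {x : G} (hx : x ∈ N) :
    ∃ K : Subgroup G, K.FiniteIndex ∧ ∀ g ∈ K, ∀ n ∈ N, Commute (ρ ⁅g, x⁆) (ρ n) := by
  have hcomm (m n : N) : Commute (ρ.linHom ρ (m : G)) (ρ.linHom ρ (n : G)) :=
    commute_linHom_of_map_commutatorElement_mem_bot ρ
      (hN _ (Subgroup.commutator_mem_commutator m.2 n.2))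
  have hperm (g : G) : ∃ e : Equiv.Perm N, ∀ n : N,
      ρ.linHom ρ g * ρ.linHom ρ (n : G) = ρ.linHom ρ (e n : G) * ρ.linHom ρ g :=
    ⟨(MulAut.conjNormal g).toEquiv, fun n ↦ by simp [← map_mul]⟩
  have heigen (n : N) : ∃ c : k, ρ.linHom ρ (n : G) (ρ x) = c • ρ x := by
    obtain ⟨c, hc⟩ := Algebra.mem_bot.1 (hN _ (Subgroup.commutator_mem_commutator n.2 hx))
    exact ⟨c, by rw [linHom_apply_eq_map_commutatorElement_mul, Algebra.smul_def, hc]⟩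
  choose χ hχ using heigen
  obtain ⟨K, hK, hKχ⟩ := isVirtuallyInvariant_commonEigenspace hcomm hperm χ
  refine ⟨K, hK, fun g hg n hn ↦ ?_⟩
  lift n to N using hn
  have hgx : ρ.linHom ρ (n : G) (ρ.linHom ρ g (ρ x)) = χ n • ρ.linHom ρ g (ρ x) :=
    mem_commonEigenspace.1 (hKχ g hg (mem_commonEigenspace.2 hχ)) n
  rw [linHom_apply_eq_map_commutatorElement_mul] at hgx
  exact commute_map_of_linHom_apply_eq_smul ρ (ρ.asGroupHom x).isUnit (hχ n) hgx

variable [IsAlgClosed k]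

theorem IsStronglyIrreducible.mem_bot_of_commute_conj (hρ : IsStronglyIrreducible ρ) {T : End k V}
    (hT : ∀ g, Commute T (ρ.linHom ρ g T)) : T ∈ (⊥ : Subalgebra k (End k V)) := by
  have := hρ.1
  have hcomm := commute_linHom_of_commute_conj ρ hT
  have hperm (g : G) : ∃ e : Equiv.Perm G, ∀ h,
      ρ g * ρ.linHom ρ h T = ρ.linHom ρ (e h) T * ρ g :=
    ⟨Equiv.mulLeft g, fun h ↦ by
      rw [Equiv.coe_mulLeft, map_mul, Module.End.mul_apply, linHom_apply_mul]⟩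
  obtain ⟨χ, hχ⟩ := exists_commonEigenspace_ne_bot hcomm
  have htop : commonEigenspace (fun g ↦ ρ.linHom ρ g T) χ = ⊤ :=
    (hρ.2 _ (isVirtuallyInvariant_commonEigenspace hcomm hperm χ)).resolve_left hχ
  refine Algebra.mem_bot.2 ⟨χ 1, LinearMap.ext fun v ↦ ?_⟩
  have hv := mem_commonEigenspace.1 (htop.ge (Submodule.mem_top (x := v))) 1
  simpa using hv.symm

end StronglyIrreducible

section Solvable

variable {k G V : Type*} [Field k] [IsAlgClosed k] [Group G] [AddCommGroup V] [Module k V]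
  [FiniteDimensional k V] {ρ : Representation k G V}

theorem IsStronglyIrreducible.map_mem_bot_of_commutator (hρ : IsStronglyIrreducible ρ)
    {N : Subgroup G} [hnormal : N.Normal]
    (hN : ∀ x ∈ ⁅N, N⁆, ρ x ∈ (⊥ : Subalgebra k (End k V))) {x : G} (hx : x ∈ N) :
    ρ x ∈ (⊥ : Subalgebra k (End k V)) := by
  obtain ⟨K, hK, hcomm⟩ := exists_finiteIndex_commute_map_commutatorElement hN hx
  refine (hρ.restrict hK).mem_bot_of_commute_conj fun g ↦ ?_
  have hmem : ⁅(g : G), x⁆ ∈ N := N.mul_mem (hnormal.conj_mem x hx g) (N.inv_mem hx)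
  obtain ⟨c, hc⟩ := Algebra.mem_bot.1 <| hρ.mem_bot_of_commute_conj fun h ↦ by
    rw [linHom_apply_eq_map_conj]
    exact hcomm g g.2 _ (hnormal.conj_mem _ hmem h)
  have hconj : ρ.linHom ρ (g : G) (ρ x) = algebraMap k _ c * ρ x := by
    rw [linHom_apply_eq_map_commutatorElement_mul, hc]
  change Commute (ρ x) (ρ.linHom ρ (g : G) (ρ x))
  rw [hconj]
  exact (Algebra.commute_algebraMap_right c _).mul_right (Commute.refl _)

theorem IsStronglyIrreducible.map_mem_bot [Group.IsSolvable G] (hρ : IsStronglyIrreducible ρ)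
    (g : G) : ρ g ∈ (⊥ : Subalgebra k (End k V)) := by
  obtain ⟨n, hn⟩ := (Group.isSolvable_def G).1 inferInstance
  have hscalar : ∀ x ∈ derivedSeries G n, ρ x ∈ (⊥ : Subalgebra k (End k V)) := by
    rintro x hx
    rw [hn, Subgroup.mem_bot] at hx
    rw [hx, map_one]
    exact one_mem _
  clear hn
  induction n with
  | zero => exact hscalar g (Subgroup.mem_top g)
  | succ n ih =>
    exact ih fun x hx ↦ hρ.map_mem_bot_of_commutator hscalar hx

end Solvable

section Triangularizable

theorem blockTriangular_toMatrix_sumQuot {R M : Type*} [CommRing R] [AddCommGroup M] [Module R M]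
    {T : End R M} {U : Submodule R M} (hU : U ≤ U.comap T) {m n : ℕ} {b : Basis (Fin m) R U}
    {c : Basis (Fin n) R (M ⧸ U)}
    (hb : (LinearMap.toMatrix b b (T.restrict hU)).BlockTriangular id)
    (hc : (LinearMap.toMatrix c c (U.mapQ U T hU)).BlockTriangular id) :
    (LinearMap.toMatrix ((b.sumQuot c).reindex finSumFinEquiv)
      ((b.sumQuot c).reindex finSumFinEquiv) T).BlockTriangular id := by
  intro i j hij
  obtain ⟨i, rfl⟩ := finSumFinEquiv.surjective i
  obtain ⟨j, rfl⟩ := finSumFinEquiv.surjective j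
  rw [LinearMap.toMatrix_apply, Basis.repr_reindex_apply, Basis.reindex_apply,
    Equiv.symm_apply_apply, Equiv.symm_apply_apply]
  rcases i with i | i <;> rcases j with j | j
  · have hzero := hb (i := i) (j := j) ((Fin.strictMono_castAdd n).lt_iff_lt.1 hij)
    rw [LinearMap.toMatrix_apply] at hzero
    rw [Basis.sumQuot_inl]
    exact (Basis.sumQuot_repr_inl_of_mem b c _ (hU (b j).2) i).trans hzero
  · exact absurd ((i.castAdd_lt n).trans_le (Fin.le_coe_natAdd m j)) (not_lt_of_gt hij)
  · rw [Basis.sumQuot_inl]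
    exact Basis.sumQuot_repr_inr_of_mem b c _ (hU (b j).2) i
  · have hzero := hc (i := i) (j := j) ((Fin.natAdd_lt_natAdd_iff m).1 hij)
    rw [LinearMap.toMatrix_apply, ← Basis.sumQuot_inr b c j] at hzero
    rw [Basis.sumQuot_repr_inr]
    exact hzero

variable {k G V : Type*} [Field k] [Group G] [AddCommGroup V] [Module k V]

/-- A representation is virtually triangularizable if the elements of some finite-index subgroup
act by upper triangular matrices in a common basis. The size `n` of the basis is existentially
quantified so that bases of a subspace and of its quotient can be joined without casts. -/
def IsVirtuallyTriangularizable (ρ : Representation k G V) : Prop :=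
  ∃ H : Subgroup G, H.FiniteIndex ∧ ∃ (n : ℕ) (b : Basis (Fin n) k V),
    ∀ h ∈ H, (LinearMap.toMatrix b b (ρ h)).BlockTriangular id

variable {ρ : Representation k G V}

theorem IsVirtuallyTriangularizable.of_restrict {H : Subgroup G} (hH : H.FiniteIndex)
    (h : IsVirtuallyTriangularizable (ρ.comp H.subtype)) : IsVirtuallyTriangularizable ρ := by
  obtain ⟨K, hK, n, b, hb⟩ := h
  refine ⟨K.map H.subtype, finiteIndex_map_subtype hH hK, n, b, ?_⟩
  rintro _ ⟨g, hg, rfl⟩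
  exact hb g hg

theorem IsVirtuallyTriangularizable.of_subrepresentation_of_quotient {U : Submodule k V}
    {hU : ∀ g, U ≤ U.comap (ρ g)} (hsub : IsVirtuallyTriangularizable (ρ.subrepresentation U hU))
    (hquot : IsVirtuallyTriangularizable (ρ.quotient U hU)) : IsVirtuallyTriangularizable ρ := by
  obtain ⟨H, hH, m, b, hb⟩ := hsub
  obtain ⟨K, hK, n, c, hc⟩ := hquot
  exact ⟨H ⊓ K, inferInstance, m + n, (b.sumQuot c).reindex finSumFinEquiv,
    fun g hg ↦ blockTriangular_toMatrix_sumQuot (hU g) (hb g hg.1) (hc g hg.2)⟩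

variable [FiniteDimensional k V]

theorem isVirtuallyTriangularizable_of_map_mem_bot
    (hρ : ∀ g, ρ g ∈ (⊥ : Subalgebra k (End k V))) : IsVirtuallyTriangularizable ρ := by
  refine ⟨⊤, inferInstance, finrank k V, finBasis k V, fun g _ ↦ ?_⟩
  obtain ⟨c, hc⟩ := Algebra.mem_bot.1 (hρ g)
  rw [← hc, LinearMap.toMatrix_algebraMap]
  exact Matrix.blockTriangular_diagonal _

theorem isVirtuallyTriangularizable_of_isSolvable [IsAlgClosed k] [Group.IsSolvable G]
    (ρ : Representation k G V) : IsVirtuallyTriangularizable ρ := by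
  induction hd : finrank k V using Nat.strong_induction_on generalizing G V with
  | _ d ih =>
  by_cases hscalar : ∀ g, ρ g ∈ (⊥ : Subalgebra k (End k V))
  · exact isVirtuallyTriangularizable_of_map_mem_bot hscalar
  have : Nontrivial V := by
    by_contra hV
    have := not_nontrivial_iff_subsingleton.1 hV
    exact hscalar fun g ↦ Subsingleton.elim 1 (ρ g) ▸ one_mem _
  obtain ⟨U, ⟨H, hH, hHU⟩, hbot, htop⟩ : ∃ U, IsVirtuallyInvariant ρ U ∧ U ≠ ⊥ ∧ U ≠ ⊤ := by
    by_contra! hU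
    exact hscalar (IsStronglyIrreducible.map_mem_bot
      ⟨this, fun U h ↦ or_iff_not_imp_left.2 (hU U h)⟩)
  have hinv : ∀ h : H, U ≤ U.comap (ρ.comp H.subtype h) := fun h ↦ hHU h h.2
  have hlt : finrank k U < d := hd ▸ Submodule.finrank_lt htop
  have hqlt : finrank k (V ⧸ U) < d := by
    have := U.finrank_quotient_add_finrank
    have := Submodule.one_le_finrank_iff.2 hbot
    omega
  exact .of_restrict hH <| .of_subrepresentation_of_quotient (hU := hinv)
    (ih _ hlt _ rfl) (ih _ hqlt _ rfl)

end Triangularizable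

theorem exists_conj_eq_toMatrix {R ι : Type*} [CommRing R] [Fintype ι] [DecidableEq ι]
    (b : Basis ι R (ι → R)) : ∃ τ : Matrix.GeneralLinearGroup ι R,
      ∀ g : Matrix.GeneralLinearGroup ι R,
        ((τ * g * τ⁻¹ : Matrix.GeneralLinearGroup ι R) : Matrix ι ι R) =
          LinearMap.toMatrix b b (Matrix.toLin' (g : Matrix ι ι R)) := by
  refine ⟨⟨b.toMatrix (Pi.basisFun R ι), (Pi.basisFun R ι).toMatrix b,
    Basis.toMatrix_mul_toMatrix_flip _ _, Basis.toMatrix_mul_toMatrix_flip _ _⟩, fun g ↦ ?_⟩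
  rw [← basis_toMatrix_mul_linearMap_toMatrix_mul_basis_toMatrix b (Pi.basisFun R ι) b
    (Pi.basisFun R ι), LinearMap.toMatrix_eq_toMatrix', LinearMap.toMatrix'_toLin']
  rfl

theorem stmt_0_general {k : Type*} [Field k] [IsAlgClosed k] {n : ℕ}
    (G : Subgroup (Matrix.GeneralLinearGroup (Fin n) k)) [Group.IsSolvable G] :
    ∃ (H : Subgroup (Matrix.GeneralLinearGroup (Fin n) k))
      (τ : Matrix.GeneralLinearGroup (Fin n) k),
      H ≤ G ∧ (H.subgroupOf G).FiniteIndex ∧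
      ∀ h ∈ H, ((τ * h * τ⁻¹ : Matrix.GeneralLinearGroup (Fin n) k) :
        Matrix (Fin n) (Fin n) k).BlockTriangular id := by
  let ρ : Representation k G (Fin n → k) :=
    (Matrix.toLinAlgEquiv' : Matrix (Fin n) (Fin n) k ≃ₐ[k] _).toMonoidHom.comp
      ((Units.coeHom _).comp G.subtype)
  obtain ⟨H, hH, m, b, hb⟩ := isVirtuallyTriangularizable_of_isSolvable ρ
  obtain rfl : m = n := by simpa using (finrank_eq_card_basis b).symm
  obtain ⟨τ, hτ⟩ := exists_conj_eq_toMatrix b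
  refine ⟨H.map G.subtype, τ, Subgroup.map_subtype_le H, ?_, ?_⟩
  · rwa [Subgroup.subgroupOf, Subgroup.comap_map_eq_self_of_injective G.subtype_injective]
  · rintro _ ⟨h, hh, rfl⟩
    rw [hτ]
    exact hb h hh

/-- Every discrete solvable subgroup `G` of `GL(3, ℂ)` is virtually triangularizable:
there exist a finite-index subgroup `H` of `G` and `τ ∈ GL(3, ℂ)` such that
`τ h τ⁻¹` is upper triangular for every `h ∈ H`. -/
theorem stmt_0 (G : Subgroup (Matrix.GeneralLinearGroup (Fin 3) ℂ))
    (hdisc : DiscreteTopology G) (hsolv : IsSolvable G) :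
    ∃ (H : Subgroup (Matrix.GeneralLinearGroup (Fin 3) ℂ))
      (τ : Matrix.GeneralLinearGroup (Fin 3) ℂ),
      H ≤ G ∧ (H.subgroupOf G).FiniteIndex ∧
      ∀ h ∈ H, ∀ i j : Fin 3, j < i →
        ((τ * h * τ⁻¹ : Matrix.GeneralLinearGroup (Fin 3) ℂ) :
          Matrix (Fin 3) (Fin 3) ℂ) i j = 0 := by
  have : Group.IsSolvable G := hsolv
  obtain ⟨H, τ, hle, hindex, htri⟩ := stmt_0_general G
  exact ⟨H, τ, hle, hindex, fun h hh _ _ hij ↦ htri h hh hij⟩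
end

section
/- Let a, x, w, z be nonzero complex numbers with |a| < 1, let θ ∈ ℝ, and let y, u ∈ ℂ with |y| + |u| ≠ 0. Let γ₁ be the diagonal matrix diag(a·e^{2πiθ}, a, a⁻²·e^{−2πiθ}) and let γ₂ be the matrix with rows (x, 0, y), (0, z, u), (0, 0, w). Then the subgroup of GL(3,ℂ) generated by γ₁ and γ₂ is not discrete. -/
/-! Conjugating by powers of a diagonal matrix `g = diag(d)` multiplies the `(i, j)` entry of `h` by
powers of `d i / d j`.  If every nonzero entry of `h` has ratio `1` or of absolute value `< 1`, the
conjugates `gᵏ h g⁻ᵏ` converge, and the limit is invertible because the determinant is constant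
along the sequence.  In a discrete (hence closed) subgroup such a sequence is eventually constant,
which forces `g` and `h` to commute, so `h` has no nonzero entry with ratio `≠ 1`.  Here the entries
`y` and `u` have ratios `a³e²` and `a³e` with `e = e^{2πiθ}`, both of absolute value `|a|³`; if
`|a| > 1`, conjugate by the inverse of the diagonal matrix instead. -/

open Filter Topology Matrix

section TopologicalGroup

variable {G : Type*} [Group G] [TopologicalSpace G] [IsTopologicalGroup G] [T2Space G]
  {Γ : Subgroup G} [DiscreteTopology Γ]

lemma eventually_eq_of_tendsto_of_mem_discrete {ι : Type*} {f : Filter ι} [NeBot f] {s : ι → G}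
    {l : G} (hs : ∀ i, s i ∈ Γ) (hl : Tendsto s f (𝓝 l)) : ∀ᶠ i in f, s i = l := by
  have hlΓ : l ∈ Γ := Subgroup.isClosed_of_discrete.mem_of_tendsto hl (.of_forall hs)
  have htendsto : Tendsto (fun i ↦ (⟨s i, hs i⟩ : Γ)) f (𝓝 ⟨l, hlΓ⟩) := tendsto_subtype_rng.2 hl
  rw [nhds_discrete, tendsto_pure] at htendsto
  exact htendsto.mono fun i hi ↦ congrArg Subtype.val hi

lemma commute_of_tendsto_conj_pow {g h l : G} (hg : g ∈ Γ) (hh : h ∈ Γ)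
    (hl : Tendsto (fun k : ℕ ↦ g ^ k * h * (g ^ k)⁻¹) atTop (𝓝 l)) : Commute g h := by
  have hmem (k : ℕ) : g ^ k * h * (g ^ k)⁻¹ ∈ Γ :=
    Γ.mul_mem (Γ.mul_mem (Γ.pow_mem hg k) hh) (Γ.inv_mem (Γ.pow_mem hg k))
  obtain ⟨k, hk⟩ := eventually_atTop.1 (eventually_eq_of_tendsto_of_mem_discrete hmem hl)
  have hsucc : g ^ k * (g * h * g⁻¹) * (g ^ k)⁻¹ = g ^ k * h * (g ^ k)⁻¹ := by
    rw [hk k le_rfl, ← hk (k + 1) k.le_succ, pow_succ]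
    group
  exact mul_inv_eq_iff_eq_mul.1 (mul_left_cancel (mul_right_cancel hsucc))

end TopologicalGroup

section GeneralLinearGroup

variable {n : Type*} [Fintype n] [DecidableEq n]

lemma isEmbedding_coe_generalLinearGroup {K : Type*} [Field K] [TopologicalSpace K]
    [IsTopologicalDivisionRing K] : IsEmbedding ((↑) : GL n K → Matrix n n K) := by
  refine Units.isEmbedding_val_mk' (f := Inv.inv) (fun A hA ↦ ?_) fun A ↦ (coe_units_inv A).symm
  refine (continuousAt_matrix_inv A ?_).continuousWithinAt
  rw [Ring.inverse_eq_inv']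
  exact continuousAt_inv₀ ((isUnit_iff_isUnit_det A).1 hA).ne_zero

section Field

variable {K : Type*} [Field K] {d : n → K} {g : GL n K}

lemma ne_zero_of_coe_eq_diagonal (hg : (g : Matrix n n K) = diagonal d) (i : n) : d i ≠ 0 :=
  (Pi.isUnit_iff.1 (isUnit_diagonal.1 (hg ▸ g.isUnit)) i).ne_zero

lemma coe_inv_of_coe_eq_diagonal (hg : (g : Matrix n n K) = diagonal d) :
    ((g⁻¹ : GL n K) : Matrix n n K) = diagonal d⁻¹ := by
  rw [coe_units_inv, hg]
  refine inv_eq_right_inv ?_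
  rw [diagonal_mul_diagonal, ← diagonal_one]
  exact congrArg diagonal (funext fun i ↦ mul_inv_cancel₀ (ne_zero_of_coe_eq_diagonal hg i))

lemma conj_pow_apply_of_coe_eq_diagonal (hg : (g : Matrix n n K) = diagonal d) (h : GL n K)
    (k : ℕ) (i j : n) : (g ^ k * h * (g ^ k)⁻¹) i j = (d i / d j) ^ k * h i j := by
  rw [← inv_pow]
  simp only [Units.val_mul, Units.val_pow_eq_pow_val, hg, coe_inv_of_coe_eq_diagonal hg,
    diagonal_pow, mul_diagonal, diagonal_mul, Pi.pow_apply, Pi.inv_apply]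
  rw [div_eq_mul_inv, mul_pow]
  ring

lemma apply_eq_of_commute_of_coe_eq_diagonal (hg : (g : Matrix n n K) = diagonal d) {h : GL n K}
    (hgh : Commute g h) {i j : n} (hij : h i j ≠ 0) : d i = d j := by
  have hentry : ((g * h : GL n K) : Matrix n n K) i j = (h * g : GL n K) i j := by rw [hgh.eq]
  rw [Units.val_mul, Units.val_mul, hg, diagonal_mul, mul_diagonal, mul_comm] at hentry
  exact mul_left_cancel₀ hij hentry

end Field

variable {𝕜 : Type*} [NormedField 𝕜] {d : n → 𝕜} {g h : GL n 𝕜}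

open Classical in
lemma tendsto_conj_pow_apply_of_coe_eq_diagonal (hg : (g : Matrix n n 𝕜) = diagonal d) {i j : n}
    (hd : h i j ≠ 0 → d i = d j ∨ ‖d i‖ < ‖d j‖) :
    Tendsto (fun k : ℕ ↦ (g ^ k * h * (g ^ k)⁻¹) i j) atTop
      (𝓝 (if d i = d j then h i j else 0)) := by
  have hdj : d j ≠ 0 := ne_zero_of_coe_eq_diagonal hg j
  simp only [conj_pow_apply_of_coe_eq_diagonal hg]
  split_ifs with hij
  · simp [hij, div_self hdj]
  by_cases hhij : h i j = 0
  · simp [hhij]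
  have hlt : ‖d i / d j‖ < 1 := by
    rw [norm_div, div_lt_one (norm_pos_iff.2 hdj)]
    exact (hd hhij).resolve_left hij
  simpa using (tendsto_pow_atTop_nhds_zero_of_norm_lt_one hlt).mul_const (h i j)

lemma exists_tendsto_conj_pow_of_coe_eq_diagonal (hg : (g : Matrix n n 𝕜) = diagonal d)
    (hd : ∀ i j, h i j ≠ 0 → d i = d j ∨ ‖d i‖ < ‖d j‖) :
    ∃ l : GL n 𝕜, Tendsto (fun k : ℕ ↦ g ^ k * h * (g ^ k)⁻¹) atTop (𝓝 l) := by
  classical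
  let L : Matrix n n 𝕜 := .of fun i j ↦ if d i = d j then h i j else 0
  have hL : Tendsto (fun k : ℕ ↦ ((g ^ k * h * (g ^ k)⁻¹ : GL n 𝕜) : Matrix n n 𝕜)) atTop (𝓝 L) :=
    tendsto_pi_nhds.2 fun i ↦ tendsto_pi_nhds.2 fun j ↦
      tendsto_conj_pow_apply_of_coe_eq_diagonal hg (hd i j)
  have hdet : L.det = (h : Matrix n n 𝕜).det := by
    refine tendsto_nhds_unique ((continuous_id.matrix_det.tendsto L).comp hL) ?_
    exact tendsto_const_nhds.congr fun k ↦ (det_units_conj (g ^ k) h).symm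
  let l : GL n 𝕜 := .mkOfDetNeZero L (hdet ▸ h.det_ne_zero)
  exact ⟨l, isEmbedding_coe_generalLinearGroup.tendsto_nhds_iff.2 hL⟩

theorem diagonal_apply_eq_of_mem_discrete {Γ : Subgroup (GL n 𝕜)} [DiscreteTopology Γ]
    (hgΓ : g ∈ Γ) (hhΓ : h ∈ Γ) (hg : (g : Matrix n n 𝕜) = diagonal d)
    (hd : ∀ i j, h i j ≠ 0 → d i = d j ∨ ‖d i‖ < ‖d j‖) {i j : n} (hij : h i j ≠ 0) :
    d i = d j := by
  obtain ⟨l, hl⟩ := exists_tendsto_conj_pow_of_coe_eq_diagonal hg hd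
  exact apply_eq_of_commute_of_coe_eq_diagonal hg (commute_of_tendsto_conj_pow hgΓ hhΓ hl) hij

end GeneralLinearGroup

section FinThree

variable {𝕜 : Type*} [NormedField 𝕜] {γ₁ γ₂ : GL (Fin 3) 𝕜}

lemma upper_right_eq_zero_of_mem_discrete {Γ : Subgroup (GL (Fin 3) 𝕜)} [DiscreteTopology Γ]
    {d : Fin 3 → 𝕜} {x y z u w : 𝕜} (h₁ : γ₁ ∈ Γ) (h₂ : γ₂ ∈ Γ)
    (hγ₁ : (γ₁ : Matrix (Fin 3) (Fin 3) 𝕜) = diagonal d)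
    (hγ₂ : (γ₂ : Matrix (Fin 3) (Fin 3) 𝕜) = !![x, 0, y; 0, z, u; 0, 0, w])
    (hd₀ : ‖d 0‖ < ‖d 2‖) (hd₁ : ‖d 1‖ < ‖d 2‖) : y = 0 ∧ u = 0 := by
  have hd (i j : Fin 3) (hij : γ₂ i j ≠ 0) : d i = d j ∨ ‖d i‖ < ‖d j‖ := by
    rw [hγ₂] at hij
    fin_cases i <;> fin_cases j <;> simp_all
  have hzero {i : Fin 3} (hi : ‖d i‖ < ‖d 2‖) : γ₂ i 2 = 0 := by
    by_contra hne
    exact hi.ne (congrArg norm (diagonal_apply_eq_of_mem_discrete h₁ h₂ hγ₁ hd hne))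
  simpa [hγ₂] using And.intro (hzero hd₀) (hzero hd₁)

theorem stmt_1_general {a e x y z u w : 𝕜} (ha : ‖a‖ ≠ 1) (he : ‖e‖ = 1) (hyu : y ≠ 0 ∨ u ≠ 0)
    (hγ₁ : (γ₁ : Matrix (Fin 3) (Fin 3) 𝕜) = diagonal ![a * e, a, a⁻¹ ^ 2 * e⁻¹])
    (hγ₂ : (γ₂ : Matrix (Fin 3) (Fin 3) 𝕜) = !![x, 0, y; 0, z, u; 0, 0, w]) :
    ¬ DiscreteTopology (Subgroup.closure {γ₁, γ₂}) := by
  intro hdiscrete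
  have h₁ : γ₁ ∈ Subgroup.closure {γ₁, γ₂} := Subgroup.subset_closure (by simp)
  have h₂ : γ₂ ∈ Subgroup.closure {γ₁, γ₂} := Subgroup.subset_closure (by simp)
  have ha₀ : a ≠ 0 := ne_zero_of_coe_eq_diagonal hγ₁ 1
  suffices y = 0 ∧ u = 0 by tauto
  rcases ha.lt_or_gt with hlt | hgt
  · have hnorm : ‖a‖ < (‖a‖⁻¹) ^ 2 :=
      hlt.trans (one_lt_pow₀ ((one_lt_inv₀ (norm_pos_iff.2 ha₀)).2 hlt) two_ne_zero)
    exact upper_right_eq_zero_of_mem_discrete h₁ h₂ hγ₁ hγ₂ (by simpa [he] using hnorm)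
      (by simpa [he] using hnorm)
  · have hnorm : ‖a‖⁻¹ < ‖a‖ ^ 2 := (inv_lt_one_of_one_lt₀ hgt).trans (one_lt_pow₀ hgt two_ne_zero)
    exact upper_right_eq_zero_of_mem_discrete (inv_mem h₁) h₂ (coe_inv_of_coe_eq_diagonal hγ₁) hγ₂
      (by simpa [he] using hnorm) (by simpa [he] using hnorm)

end FinThree

/-- Let `a, x, w, z` be nonzero complex numbers with `|a| < 1`, `θ ∈ ℝ`, and `y, u ∈ ℂ` with
`|y| + |u| ≠ 0`.  Let `γ₁ = diag(a·e^{2πiθ}, a, a⁻²·e^{−2πiθ})` and let `γ₂` have rows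
`(x, 0, y)`, `(0, z, u)`, `(0, 0, w)`.  Then the subgroup of `GL(3, ℂ)` generated by
`γ₁` and `γ₂` is not discrete. -/
theorem stmt_1 (a x w z : ℂ) (θ : ℝ) (y u : ℂ)
    (ha : a ≠ 0) (hx : x ≠ 0) (hw : w ≠ 0) (hz : z ≠ 0)
    (ha1 : ‖a‖ < 1) (hyu : ‖y‖ + ‖u‖ ≠ 0)
    (γ₁ γ₂ : Matrix.GeneralLinearGroup (Fin 3) ℂ)
    (hγ₁ : (γ₁ : Matrix (Fin 3) (Fin 3) ℂ) =
      Matrix.diagonal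
        ![a * Complex.exp (2 * (Real.pi : ℂ) * Complex.I * (θ : ℂ)), a,
          a⁻¹ ^ 2 * Complex.exp (-(2 * (Real.pi : ℂ) * Complex.I * (θ : ℂ)))])
    (hγ₂ : (γ₂ : Matrix (Fin 3) (Fin 3) ℂ) = !![x, 0, y; 0, z, u; 0, 0, w]) :
    ¬ DiscreteTopology
        (Subgroup.closure {γ₁, γ₂} : Subgroup (Matrix.GeneralLinearGroup (Fin 3) ℂ)) := by
  have hexp : ‖Complex.exp (2 * (Real.pi : ℂ) * Complex.I * (θ : ℂ))‖ = 1 := by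
    simp [Complex.norm_exp]
  exact stmt_1_general ha1.ne hexp (by contrapose! hyu; simp [hyu])
    (Complex.exp_neg (2 * (Real.pi : ℂ) * Complex.I * (θ : ℂ)) ▸ hγ₁) hγ₂
end

section
/- Let λ be a nonzero complex number with |λ| ≠ 1. If Γ ≤ GL(3,ℂ) is a discrete subgroup all of whose elements are upper triangular and which contains the complex homothety diag(λ⁻², λ, λ), then every element α ∈ Γ satisfies α₁₂ = 0 and α₁₃ = 0. -/
/-!
Conjugating `α` by the `k`-th power of `diag(d)` multiplies the entry `α i j` by `(d i / d j) ^ k`.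
If `α` is block triangular with respect to the eigenspaces of the diagonal matrix, and these are
ordered by the absolute value of the eigenvalue, then the conjugates by the powers of the diagonal
matrix or of its inverse converge in `GL`: the off-diagonal blocks tend to `0`, while the limit
keeps the determinant of `α`. In a discrete subgroup a convergent sequence has ratios of
consecutive terms eventually equal to `1`, which forces `α` to commute with the diagonal matrix.
-/

open Filter Matrix Topology

theorem eventually_eq_of_tendsto_of_discreteTopology {X ι : Type*} [TopologicalSpace X] {S : Set X}
    [DiscreteTopology S] {l : Filter ι} {u : ι → X} {x : X} (hu : ∀ i, u i ∈ S) (hx : x ∈ S)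
    (hlim : Tendsto u l (𝓝 x)) : ∀ᶠ i in l, u i = x := by
  have hlimS : Tendsto (fun i ↦ (⟨u i, hu i⟩ : S)) l (𝓝 ⟨x, hx⟩) := tendsto_subtype_rng.2 hlim
  rw [nhds_discrete, tendsto_pure] at hlimS
  exact hlimS.mono fun i hi ↦ congrArg Subtype.val hi

theorem commute_of_tendsto_conj_pow_s3 {G : Type*} [Group G] [TopologicalSpace G]
    [IsTopologicalGroup G] {Γ : Subgroup G} [DiscreteTopology Γ] {γ α β : G}
    (hγ : γ ∈ Γ) (hα : α ∈ Γ)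
    (hlim : Tendsto (fun k : ℕ ↦ γ ^ k * α * (γ ^ k)⁻¹) atTop (𝓝 β)) : Commute γ α := by
  set u : ℕ → G := fun k ↦ γ ^ k * α * (γ ^ k)⁻¹
  have hu (k : ℕ) : u k ∈ Γ :=
    Γ.mul_mem (Γ.mul_mem (Γ.pow_mem hγ k) hα) (Γ.inv_mem (Γ.pow_mem hγ k))
  have hratio : Tendsto (fun k ↦ u (k + 1) * (u k)⁻¹) atTop (𝓝 1) := by
    simpa only [Function.comp_def, mul_inv_cancel] using
      (hlim.comp (tendsto_add_atTop_nat 1)).mul hlim.inv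
  obtain ⟨k, hk⟩ := (eventually_eq_of_tendsto_of_discreteTopology (S := (Γ : Set G))
    (fun k ↦ Γ.mul_mem (hu (k + 1)) (Γ.inv_mem (hu k))) Γ.one_mem hratio).exists
  have hconj : γ ^ k * (γ * α * γ⁻¹) * (γ ^ k)⁻¹ = γ ^ k * α * (γ ^ k)⁻¹ :=
    calc γ ^ k * (γ * α * γ⁻¹) * (γ ^ k)⁻¹ = u (k + 1) := by simp only [u, pow_succ]; group
      _ = u k := mul_inv_eq_one.1 hk
  exact mul_inv_eq_iff_eq_mul.1 (mul_left_cancel (mul_right_cancel hconj))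

section GeneralLinearGroup

variable {n : Type*} [Fintype n] [DecidableEq n]

theorem isEmbedding_val_generalLinearGroup {K : Type*} [Field K] [TopologicalSpace K]
    [IsTopologicalDivisionRing K] :
    IsEmbedding (Units.val : GL n K → Matrix n n K) := by
  refine Units.isEmbedding_val_mk' (f := Inv.inv) (fun A hA ↦ ?_) fun A ↦ (coe_units_inv A).symm
  have hdet : A.det ≠ 0 := ((isUnit_iff_isUnit_det A).1 hA).ne_zero
  refine (continuousAt_matrix_inv A ?_).continuousWithinAt
  simpa only [Ring.inverse_eq_inv'] using continuousAt_inv₀ hdet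

section Diagonal

variable {K : Type*} [Field K] {γ α : GL n K} {d : n → K}

theorem ne_zero_of_val_eq_diagonal (hγ : (γ : Matrix n n K) = diagonal d) (i : n) : d i ≠ 0 := by
  have hdet := GeneralLinearGroup.det_ne_zero γ
  rw [hγ, det_diagonal, Finset.prod_ne_zero_iff] at hdet
  exact hdet i (Finset.mem_univ i)

theorem val_inv_eq_diagonal (hγ : (γ : Matrix n n K) = diagonal d) :
    ((γ⁻¹ : GL n K) : Matrix n n K) = diagonal fun i ↦ (d i)⁻¹ := by
  rw [coe_units_inv, hγ]
  refine inv_eq_left_inv ?_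
  rw [diagonal_mul_diagonal, ← diagonal_one]
  exact congrArg diagonal (funext fun i ↦ inv_mul_cancel₀ (ne_zero_of_val_eq_diagonal hγ i))

theorem conj_pow_apply (hγ : (γ : Matrix n n K) = diagonal d) (k : ℕ) (i j : n) :
    (γ ^ k * α * (γ ^ k)⁻¹) i j = (d i / d j) ^ k * α i j := by
  rw [← inv_pow, Units.val_mul, Units.val_mul, Units.val_pow_eq_pow_val, Units.val_pow_eq_pow_val,
    hγ, val_inv_eq_diagonal hγ, diagonal_pow, diagonal_pow, mul_diagonal, diagonal_mul,
    Pi.pow_apply, Pi.pow_apply, div_eq_mul_inv, mul_pow, mul_right_comm]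

theorem apply_eq_zero_of_commute (hγ : (γ : Matrix n n K) = diagonal d) (hcomm : Commute γ α)
    {i j : n} (hij : d i ≠ d j) : α i j = 0 := by
  have hmul : diagonal d * (α : Matrix n n K) = α * diagonal d := by
    simpa only [Units.val_mul, hγ] using congrArg Units.val hcomm.eq
  have hentry : d i * α i j = d j * α i j := by
    simpa only [diagonal_mul, mul_diagonal, mul_comm (α i j)] using congrFun₂ hmul i j
  exact (mul_eq_mul_right_iff.1 hentry).resolve_left hij

end Diagonal

variable {𝕜 : Type*} [NormedField 𝕜] {Γ : Subgroup (GL n 𝕜)} {γ α : GL n 𝕜} {d : n → 𝕜}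

theorem exists_tendsto_conj_pow_apply (hγ : (γ : Matrix n n 𝕜) = diagonal d) {i j : n}
    (hα : α i j ≠ 0 → d i = d j ∨ ‖d i‖ < ‖d j‖) :
    ∃ l : 𝕜, Tendsto (fun k : ℕ ↦ (γ ^ k * α * (γ ^ k)⁻¹) i j) atTop (𝓝 l) := by
  have hdj : d j ≠ 0 := ne_zero_of_val_eq_diagonal hγ j
  simp only [conj_pow_apply hγ]
  by_cases hzero : α i j = 0
  · simp only [hzero, mul_zero]
    exact ⟨0, tendsto_const_nhds⟩
  rcases hα hzero with heq | hlt
  · simp only [heq, div_self hdj, one_pow, one_mul]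
    exact ⟨α i j, tendsto_const_nhds⟩
  · have hratio : ‖d i / d j‖ < 1 := by
      rwa [norm_div, div_lt_one (norm_pos_iff.2 hdj)]
    exact ⟨_, (tendsto_pow_atTop_nhds_zero_of_norm_lt_one hratio).mul_const (α i j)⟩

theorem exists_tendsto_conj_pow (hγ : (γ : Matrix n n 𝕜) = diagonal d)
    (hα : ∀ i j, α i j ≠ 0 → d i = d j ∨ ‖d i‖ < ‖d j‖) :
    ∃ β : GL n 𝕜, Tendsto (fun k : ℕ ↦ γ ^ k * α * (γ ^ k)⁻¹) atTop (𝓝 β) := by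
  choose l hl using fun i j ↦ exists_tendsto_conj_pow_apply hγ (hα i j)
  let L : Matrix n n 𝕜 := of l
  have hlim : Tendsto (fun k : ℕ ↦ ((γ ^ k * α * (γ ^ k)⁻¹ : GL n 𝕜) : Matrix n n 𝕜)) atTop
      (𝓝 L) := tendsto_pi_nhds.2 fun i ↦ tendsto_pi_nhds.2 fun j ↦ hl i j
  have hdet_lim := (continuous_id.matrix_det.tendsto L).comp hlim
  simp only [Function.comp_def, id, Units.val_mul, det_units_conj] at hdet_lim
  have hdet : (α : Matrix n n 𝕜).det = L.det := tendsto_nhds_unique tendsto_const_nhds hdet_lim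
  have hL : L.det ≠ 0 := hdet ▸ GeneralLinearGroup.det_ne_zero α
  exact ⟨GeneralLinearGroup.mkOfDetNeZero L hL,
    isEmbedding_val_generalLinearGroup.tendsto_nhds_iff.2 hlim⟩

theorem commute_of_val_eq_diagonal [DiscreteTopology Γ] (hγΓ : γ ∈ Γ) (hαΓ : α ∈ Γ)
    (hγ : (γ : Matrix n n 𝕜) = diagonal d)
    (hα : ∀ i j, α i j ≠ 0 → d i = d j ∨ ‖d i‖ < ‖d j‖) : Commute γ α :=
  let ⟨_, hlim⟩ := exists_tendsto_conj_pow hγ hα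
  commute_of_tendsto_conj_pow_s3 hγΓ hαΓ hlim

theorem stmt_3_general {ι : Type*} [LinearOrder ι] {b : n → ι} {c : ι → 𝕜} [DiscreteTopology Γ]
    (hc : StrictMono (fun i ↦ ‖c i‖) ∨ StrictAnti (fun i ↦ ‖c i‖))
    (hγΓ : γ ∈ Γ) (hγ : (γ : Matrix n n 𝕜) = diagonal fun i ↦ c (b i))
    (hαΓ : α ∈ Γ) (hα : (α : Matrix n n 𝕜).BlockTriangular b) {i j : n} (hij : b i ≠ b j) :
    α i j = 0 := by
  have hle {i j : n} (h : α i j ≠ 0) : b i = b j ∨ b i < b j :=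
    (le_of_not_gt fun hlt ↦ h (hα hlt)).eq_or_lt
  have hcinj : Function.Injective c :=
    .of_comp (f := norm) (hc.elim StrictMono.injective StrictAnti.injective)
  refine apply_eq_zero_of_commute hγ ?_ (hcinj.ne hij)
  rcases hc with hmono | hanti
  · exact commute_of_val_eq_diagonal hγΓ hαΓ hγ fun i j h ↦
      (hle h).imp (congrArg c) (hmono ·)
  · refine Commute.inv_left_iff.1 <|
      commute_of_val_eq_diagonal (Γ.inv_mem hγΓ) hαΓ (val_inv_eq_diagonal hγ) fun i j h ↦
        (hle h).imp (congrArg fun m ↦ (c m)⁻¹) fun hlt ↦ ?_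
    rw [norm_inv, norm_inv]
    exact inv_strictAnti₀ (norm_pos_iff.2 (ne_zero_of_val_eq_diagonal hγ j)) (hanti hlt)

end GeneralLinearGroup

theorem norm_inv_sq_ne_norm {𝕜 : Type*} [NormedDivisionRing 𝕜] {z : 𝕜} (hz : z ≠ 0)
    (hz₁ : ‖z‖ ≠ 1) : ‖z⁻¹ ^ 2‖ ≠ ‖z‖ := by
  have hpos : 0 < ‖z‖ := norm_pos_iff.2 hz
  intro h
  refine hz₁ ((pow_eq_one_iff_of_nonneg hpos.le three_ne_zero).1 ?_)
  rw [norm_pow, norm_inv] at h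
  field_simp at h
  exact h.symm

theorem strictMono_or_strictAnti_of_fin_two {α : Type*} [LinearOrder α] {f : Fin 2 → α}
    (hf : f 0 ≠ f 1) : StrictMono f ∨ StrictAnti f :=
  hf.lt_or_gt.imp (fun h ↦ Fin.strictMono_iff_lt_succ.2 (by simpa using h))
    fun h ↦ Fin.strictAnti_iff_succ_lt.2 (by simpa using h)

/-- If `Γ ≤ GL(3, ℂ)` is a discrete subgroup all of whose elements are upper triangular
and which contains the complex homothety `diag(λ⁻², λ, λ)` with `|λ| ≠ 1`, then every
`α ∈ Γ` satisfies `α₁₂ = 0` and `α₁₃ = 0`. -/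
theorem stmt_3 (lam : ℂ) (hlam : lam ≠ 0) (habs : ‖lam‖ ≠ 1)
    (Γ : Subgroup (Matrix.GeneralLinearGroup (Fin 3) ℂ)) (hdisc : DiscreteTopology Γ)
    (hupper : ∀ γ ∈ Γ, ∀ i j : Fin 3, j < i → (γ : Matrix (Fin 3) (Fin 3) ℂ) i j = 0)
    (hhom : ∃ γ ∈ Γ, (γ : Matrix (Fin 3) (Fin 3) ℂ) = Matrix.diagonal ![lam⁻¹ ^ 2, lam, lam]) :
    ∀ α ∈ Γ, (α : Matrix (Fin 3) (Fin 3) ℂ) 0 1 = 0 ∧ (α : Matrix (Fin 3) (Fin 3) ℂ) 0 2 = 0 := by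
  intro α hα
  obtain ⟨γ, hγΓ, hγ⟩ := hhom
  let b : Fin 3 → Fin 2 := ![0, 1, 1]
  let c : Fin 2 → ℂ := ![lam⁻¹ ^ 2, lam]
  have hb : Monotone b := by decide
  have hc := strictMono_or_strictAnti_of_fin_two (f := fun i ↦ ‖c i‖)
    (norm_inv_sq_ne_norm hlam habs)
  have hγ' : (γ : Matrix (Fin 3) (Fin 3) ℂ) = diagonal fun i ↦ c (b i) :=
    hγ.trans (congrArg diagonal (by ext i; fin_cases i <;> rfl))
  have hblock : (α : Matrix (Fin 3) (Fin 3) ℂ).BlockTriangular b :=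
    fun i j hij ↦ hupper α hα i j (hb.reflect_lt hij)
  exact ⟨stmt_3_general hc hγΓ hγ' hα hblock (by decide),
    stmt_3_general hc hγΓ hγ' hα hblock (by decide)⟩
end

section
/- Let β be a nonzero complex number with |β| ≠ 1, let θ be an irrational real number, and let γ be the irrational screw diag(β⁻², β·e^{4πiθ}, β·e^{2πiθ}). If α ∈ GL(3,ℂ) is upper triangular and the subgroup of GL(3,ℂ) generated by α and γ is discrete, then α is diagonal. -/
/-!
If `δ` is diagonal with entries `d i`, conjugation by `δ ^ n` multiplies the `(i, j)` entry of a
matrix by `(d i / d j) ^ n`. An entry of an upper triangular `α` can only be nonzero for `i ≤ j`,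
where that factor stays bounded as soon as `‖d i‖` increases with `i`; the same holds for `α⁻¹`. So
the conjugates of `α` by the powers of `δ` stay in a compact subset of the general linear group, and
in a discrete group only finitely many of them are distinct: `α` commutes with `δ ^ n` for some
`0 < n`. If the entries of `δ ^ n` are distinct, `α` must be diagonal. The moduli of the entries of
a screw are either increasing or decreasing; in the second case one conjugates by `δ⁻¹`.
-/

theorem exists_commute_pow_of_forall_conj_mem_isCompact {G : Type*} [Group G] [TopologicalSpace G]
    [IsTopologicalGroup G] [T2Space G] {H : Subgroup G} [DiscreteTopology H] {g x : G} (hg : g ∈ H)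
    (hx : x ∈ H) {K : Set G} (hK : IsCompact K) (hconj : ∀ n : ℕ, g ^ n * x * (g ^ n)⁻¹ ∈ K) :
    ∃ n : ℕ, n ≠ 0 ∧ Commute (g ^ n) x := by
  have hfinite : (K ∩ H).Finite :=
    (hK.inter_right H.isClosed_of_discrete).finite <|
      IsDiscrete.mono ⟨inferInstance⟩ Set.inter_subset_right
  have hmem (n : ℕ) : g ^ n * x * (g ^ n)⁻¹ ∈ K ∩ H :=
    ⟨hconj n, H.mul_mem (H.mul_mem (H.pow_mem hg n) hx) (H.inv_mem (H.pow_mem hg n))⟩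
  obtain ⟨m, n, hmn, heq⟩ := hfinite.exists_lt_map_eq_of_forall_mem hmem
  refine ⟨n - m, Nat.sub_ne_zero_of_lt hmn, ?_⟩
  obtain ⟨k, rfl⟩ := Nat.exists_eq_add_of_le hmn.le
  have hcancel : g ^ k * x * (g ^ k)⁻¹ = x := by
    apply (MulAut.conj (g ^ m)).injective
    simpa only [MulAut.conj_apply, pow_add, mul_inv_rev, mul_assoc] using heq.symm
  rwa [Nat.add_sub_cancel_left, commute_iff_eq, ← mul_inv_eq_iff_eq_mul]

theorem isCompact_setOf_units_val_mem_inv_mem {M : Type*} [Monoid M] [TopologicalSpace M]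
    [ContinuousMul M] [T1Space M] {K L : Set M} (hK : IsCompact K) (hL : IsCompact L) :
    IsCompact {u : Mˣ | (u : M) ∈ K ∧ (↑u⁻¹ : M) ∈ L} :=
  Units.isClosedEmbedding_embedProduct.isCompact_preimage <|
    hK.prod (MulOpposite.opHomeomorph.symm.isClosedEmbedding.isCompact_preimage hL)

open Matrix

section Matrix

variable {ι 𝕜 : Type*}

theorem isCompact_setOf_norm_apply_le {κ : Type*} [SeminormedAddCommGroup 𝕜] [ProperSpace 𝕜]
    (c : ι → κ → ℝ) : IsCompact {A : Matrix ι κ 𝕜 | ∀ i j, ‖A i j‖ ≤ c i j} := by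
  suffices h : IsCompact {f : ι → κ → 𝕜 | ∀ i j, ‖f i j‖ ≤ c i j} from h
  simpa only [Set.pi, Set.mem_univ, forall_const, mem_closedBall_zero_iff, Set.mem_ofPred_eq]
    using isCompact_univ_pi fun i => isCompact_univ_pi fun j =>
      isCompact_closedBall (0 : 𝕜) (c i j)

variable [Fintype ι] [DecidableEq ι]

theorem isDiag_of_commute_diagonal {R : Type*} [CommRing R] [NoZeroDivisors R] {d : ι → R}
    (hd : Function.Injective d) {A : Matrix ι ι R} (hA : Commute (diagonal d) A) : A.IsDiag := by
  intro i j hij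
  have hentry : d i * A i j = A i j * d j := by
    simpa only [diagonal_mul, mul_diagonal] using congrFun₂ hA.eq i j
  have hprod : (d i - d j) * A i j = 0 := by linear_combination hentry
  exact (mul_eq_zero.mp hprod).resolve_left (sub_ne_zero.mpr (hd.ne hij))

theorem ne_zero_of_coe_eq_diagonal_s4 {R : Type*} [CommRing R] [Nontrivial R] {δ : GL ι R}
    {d : ι → R} (hδ : (δ : Matrix ι ι R) = diagonal d) (i : ι) : d i ≠ 0 := by
  have hunit : IsUnit (diagonal d) := hδ ▸ δ.isUnit
  exact (isUnit_diagonal.mp hunit |>.map (Pi.evalMonoidHom _ i)).ne_zero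

section Field

variable [Field 𝕜]

theorem coe_inv_eq_diagonal_inv {δ : GL ι 𝕜} {d : ι → 𝕜}
    (hδ : (δ : Matrix ι ι 𝕜) = diagonal d) : (↑δ⁻¹ : Matrix ι ι 𝕜) = diagonal d⁻¹ := by
  rw [coe_units_inv, hδ]
  refine inv_eq_right_inv ?_
  rw [diagonal_mul_diagonal, ← diagonal_one]
  exact congrArg diagonal (funext fun i => mul_inv_cancel₀ (ne_zero_of_coe_eq_diagonal_s4 hδ i))

theorem conj_diagonal_apply {δ : GL ι 𝕜} {d : ι → 𝕜} (hδ : (δ : Matrix ι ι 𝕜) = diagonal d)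
    (a : GL ι 𝕜) (i j : ι) : (δ * a * δ⁻¹ : GL ι 𝕜) i j = d i / d j * a i j := by
  simp only [Units.val_mul, hδ, coe_inv_eq_diagonal_inv hδ, diagonal_mul, mul_diagonal,
    Pi.inv_apply]
  ring

end Field

section NormedField

variable [NormedField 𝕜] {δ α : GL ι 𝕜} {d : ι → 𝕜}

theorem norm_conj_diagonal_apply_le (hδ : (δ : Matrix ι ι 𝕜) = diagonal d)
    (hα : BlockTriangular (α : Matrix ι ι 𝕜) fun i => ‖d i‖) (i j : ι) :
    ‖(δ * α * δ⁻¹ : GL ι 𝕜) i j‖ ≤ ‖α i j‖ := by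
  rw [conj_diagonal_apply hδ, norm_mul, norm_div]
  obtain hlt | hle := lt_or_ge ‖d j‖ ‖d i‖
  · simp [hα hlt]
  · exact mul_le_of_le_one_left (norm_nonneg _) (div_le_one_of_le₀ hle (norm_nonneg _))

variable [ProperSpace 𝕜]

theorem exists_isCompact_forall_conj_diagonal_pow_mem (hδ : (δ : Matrix ι ι 𝕜) = diagonal d)
    (hα : BlockTriangular (α : Matrix ι ι 𝕜) fun i => ‖d i‖) :
    ∃ K : Set (GL ι 𝕜), IsCompact K ∧ ∀ n : ℕ, δ ^ n * α * (δ ^ n)⁻¹ ∈ K := by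
  refine ⟨_, isCompact_setOf_units_val_mem_inv_mem
    (isCompact_setOf_norm_apply_le fun i j => ‖α i j‖)
    (isCompact_setOf_norm_apply_le fun i j => ‖α⁻¹ i j‖), fun n => ?_⟩
  have hpow : (↑(δ ^ n) : Matrix ι ι 𝕜) = diagonal (d ^ n) := by
    rw [Units.val_pow_eq_pow_val, hδ, diagonal_pow]
  have htri {a : Matrix ι ι 𝕜} (ha : BlockTriangular a fun i => ‖d i‖) :
      BlockTriangular a fun i => ‖(d ^ n) i‖ := fun i j hij =>
    ha (lt_of_pow_lt_pow_left₀ n (norm_nonneg _) (by simpa using hij))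
  have hinv : BlockTriangular (↑α⁻¹ : Matrix ι ι 𝕜) fun i => ‖d i‖ := by
    have := α.invertible
    simpa only [coe_units_inv] using blockTriangular_inv_of_blockTriangular hα
  refine ⟨norm_conj_diagonal_apply_le hpow (htri hα), ?_⟩
  rw [conj_inv]
  exact norm_conj_diagonal_apply_le hpow (htri hinv)

theorem isDiag_of_discrete_of_blockTriangular_norm {H : Subgroup (GL ι 𝕜)} [DiscreteTopology H]
    (hδH : δ ∈ H) (hαH : α ∈ H) (hδ : (δ : Matrix ι ι 𝕜) = diagonal d)
    (hd : ∀ n : ℕ, n ≠ 0 → Function.Injective (d ^ n))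
    (hα : BlockTriangular (α : Matrix ι ι 𝕜) fun i => ‖d i‖) :
    (α : Matrix ι ι 𝕜).IsDiag := by
  obtain ⟨K, hK, hconj⟩ := exists_isCompact_forall_conj_diagonal_pow_mem hδ hα
  obtain ⟨n, hn, hcomm⟩ := exists_commute_pow_of_forall_conj_mem_isCompact hδH hαH hK hconj
  refine isDiag_of_commute_diagonal (hd n hn) ?_
  rw [← diagonal_pow, ← hδ, ← Units.val_pow_eq_pow_val]
  exact hcomm.units_val

end NormedField

end Matrix

section Screw

/-- The diagonal entries of the screw `diag(β⁻², β·e^{4πiθ}, β·e^{2πiθ})`. -/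
noncomputable def screwEntries (β : ℂ) (θ : ℝ) : Fin 3 → ℂ :=
  ![β⁻¹ ^ 2, β * Complex.exp (4 * (Real.pi : ℂ) * Complex.I * (θ : ℂ)),
    β * Complex.exp (2 * (Real.pi : ℂ) * Complex.I * (θ : ℂ))]

theorem norm_screwEntries (β : ℂ) (θ : ℝ) :
    (fun i => ‖screwEntries β θ i‖) = ![‖β‖⁻¹ ^ 2, ‖β‖, ‖β‖] := by
  funext i
  fin_cases i <;> simp [screwEntries, Complex.norm_exp]

theorem monotone_or_antitone_norm_screwEntries (β : ℂ) (θ : ℝ) :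
    Monotone (fun i => ‖screwEntries β θ i‖) ∨ Antitone (fun i => ‖screwEntries β θ i‖) := by
  rw [norm_screwEntries]
  exact (le_total (‖β‖⁻¹ ^ 2) ‖β‖).imp
    (fun h => monotone_vecCons.mpr ⟨h, by simp⟩) fun h => antitone_vecCons.mpr ⟨h, by simp⟩

theorem exp_two_pi_I_mul_irrational_pow_ne_one {θ : ℝ} (hθ : Irrational θ) {n : ℕ} (hn : n ≠ 0) :
    Complex.exp (2 * (Real.pi : ℂ) * Complex.I * (θ : ℂ)) ^ n ≠ 1 := by
  rw [← Complex.exp_nat_mul, Ne, Complex.exp_eq_one_iff]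
  rintro ⟨k, hk⟩
  have hint : (n * θ : ℂ) = k :=
    mul_right_cancel₀ Complex.two_pi_I_ne_zero (by linear_combination hk)
  exact (hθ.natCast_mul hn).ne_int k (by exact_mod_cast hint)

theorem inv_sq_ne_self {r : ℝ} (hr : 0 < r) (hr1 : r ≠ 1) : r⁻¹ ^ 2 ≠ r := by
  intro h
  have hcube : r ^ 3 = 1 := by
    calc r ^ 3 = r ^ 2 * r := pow_succ r 2
      _ = r ^ 2 * r⁻¹ ^ 2 := by rw [h]
      _ = 1 := by rw [← mul_pow, mul_inv_cancel₀ hr.ne', one_pow]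
  exact hr1 ((pow_eq_one_iff_of_nonneg hr.le three_ne_zero).mp hcube)

theorem screwEntries_zero_pow_ne {β : ℂ} (hβ : β ≠ 0) (hβ1 : ‖β‖ ≠ 1) (θ : ℝ) {n : ℕ}
    (hn : n ≠ 0) {j : Fin 3} (hj : j ≠ 0) : screwEntries β θ 0 ^ n ≠ screwEntries β θ j ^ n := by
  intro h
  have hnorm : ‖screwEntries β θ 0‖ = ‖screwEntries β θ j‖ := by
    simpa only [norm_pow, pow_left_inj₀ (norm_nonneg _) (norm_nonneg _) hn] using congrArg norm h
  have hnorm_zero : ‖screwEntries β θ 0‖ = ‖β‖⁻¹ ^ 2 := congrFun (norm_screwEntries β θ) 0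
  have hnorm_j : ‖screwEntries β θ j‖ = ‖β‖ := by
    rw [congrFun (norm_screwEntries β θ) j]
    fin_cases j <;> simp_all
  exact inv_sq_ne_self (norm_pos_iff.mpr hβ) hβ1 (hnorm_zero.symm.trans (hnorm.trans hnorm_j))

theorem screwEntries_one_eq_exp_mul (β : ℂ) (θ : ℝ) : screwEntries β θ 1 =
    Complex.exp (2 * (Real.pi : ℂ) * Complex.I * (θ : ℂ)) * screwEntries β θ 2 := by
  simp only [screwEntries, cons_val]
  rw [mul_left_comm, ← Complex.exp_add]
  ring_nf

theorem screwEntries_one_pow_ne_two_pow {β : ℂ} (hβ : β ≠ 0) {θ : ℝ} (hθ : Irrational θ) {n : ℕ}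
    (hn : n ≠ 0) : screwEntries β θ 1 ^ n ≠ screwEntries β θ 2 ^ n := by
  have hne : screwEntries β θ 2 ^ n ≠ 0 := by simp [screwEntries, hβ]
  rw [screwEntries_one_eq_exp_mul, mul_pow, Ne, mul_eq_right₀ hne]
  exact exp_two_pi_I_mul_irrational_pow_ne_one hθ hn

theorem injective_screwEntries_pow {β : ℂ} (hβ : β ≠ 0) (hβ1 : ‖β‖ ≠ 1) {θ : ℝ}
    (hθ : Irrational θ) {n : ℕ} (hn : n ≠ 0) : Function.Injective (screwEntries β θ ^ n) := by
  refine Function.Injective.of_lt_imp_ne fun i j hij => ?_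
  obtain rfl | hi := eq_or_ne i 0
  · exact screwEntries_zero_pow_ne hβ hβ1 θ hn hij.ne'
  · obtain ⟨rfl, rfl⟩ : i = 1 ∧ j = 2 := by omega
    exact screwEntries_one_pow_ne_two_pow hβ hθ hn

end Screw

theorem stmt_4_general {ι 𝕜 : Type*} [Fintype ι] [LinearOrder ι] [NormedField 𝕜] [ProperSpace 𝕜]
    {d : ι → 𝕜} (hnorm : Monotone (fun i => ‖d i‖) ∨ Antitone (fun i => ‖d i‖))
    (hd : ∀ n : ℕ, n ≠ 0 → Function.Injective (d ^ n)) {γ α : GL ι 𝕜}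
    (hγ : (γ : Matrix ι ι 𝕜) = diagonal d) (hupper : BlockTriangular (α : Matrix ι ι 𝕜) id)
    (hdisc : DiscreteTopology (Subgroup.closure {α, γ})) : (α : Matrix ι ι 𝕜).IsDiag := by
  have hαH : α ∈ Subgroup.closure {α, γ} := Subgroup.mem_closure_of_mem (by simp)
  have hγH : γ ∈ Subgroup.closure {α, γ} := Subgroup.mem_closure_of_mem (by simp)
  obtain hmono | hanti := hnorm
  · exact isDiag_of_discrete_of_blockTriangular_norm hγH hαH hγ hd fun i j hij =>
      hupper (hmono.reflect_lt hij)
  · have hd_inv (n : ℕ) (hn : n ≠ 0) : Function.Injective (d⁻¹ ^ n) := by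
      rw [inv_pow]
      exact inv_injective.comp (hd n hn)
    refine isDiag_of_discrete_of_blockTriangular_norm (inv_mem hγH) hαH
      (coe_inv_eq_diagonal_inv hγ) hd_inv fun i j hij => hupper (hanti.reflect_lt ?_)
    simp only [Pi.inv_apply, norm_inv] at hij
    have hpos (k : ι) : 0 < ‖d k‖ := norm_pos_iff.mpr (ne_zero_of_coe_eq_diagonal_s4 hγ k)
    exact (inv_lt_inv₀ (hpos j) (hpos i)).mp hij

/-- Let `γ` be the irrational screw `diag(β⁻², β·e^{4πiθ}, β·e^{2πiθ})` with `|β| ≠ 1`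
and `θ` irrational.  If `α ∈ GL(3, ℂ)` is upper triangular and the subgroup generated by
`α` and `γ` is discrete, then `α` is diagonal. -/
theorem stmt_4 (β : ℂ) (hβ : β ≠ 0) (hβ1 : ‖β‖ ≠ 1) (θ : ℝ) (hθ : Irrational θ)
    (γ α : Matrix.GeneralLinearGroup (Fin 3) ℂ)
    (hγ : (γ : Matrix (Fin 3) (Fin 3) ℂ) =
      Matrix.diagonal
        ![β⁻¹ ^ 2, β * Complex.exp (4 * (Real.pi : ℂ) * Complex.I * (θ : ℂ)),
          β * Complex.exp (2 * (Real.pi : ℂ) * Complex.I * (θ : ℂ))])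
    (hupper : ∀ i j : Fin 3, j < i → (α : Matrix (Fin 3) (Fin 3) ℂ) i j = 0)
    (hdisc : DiscreteTopology
      (Subgroup.closure {α, γ} : Subgroup (Matrix.GeneralLinearGroup (Fin 3) ℂ))) :
    ∀ i j : Fin 3, i ≠ j → (α : Matrix (Fin 3) (Fin 3) ℂ) i j = 0 :=
  fun _ _ hij => stmt_4_general (monotone_or_antitone_norm_screwEntries β θ)
    (fun _ hn => injective_screwEntries_pow hβ hβ1 hθ hn) hγ hupper hdisc hij
end

section
/- Let Γ ≤ GL(3,ℂ) be a discrete, non-commutative subgroup all of whose elements are upper triangular, such that Γ is torsion free and the multiplicative groups λ₁₂(Γ) and λ₂₃(Γ) are torsion free. Then Γ contains no complex homothety of the form diag(λ, λ, λ⁻²) with λ ∈ ℂ∖{0} and |λ| ≠ 1. -/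
/-!
Let `h = diag(a, a, b) ∈ Γ` with `a / b` not a root of unity. Conjugation by `h` multiplies the
upper two entries of the last column of `g ∈ Γ` by `a / b` and fixes all other entries, so the
conjugates of `g` by powers of `h` lie on the affine line obtained by rescaling these two entries.
If the entries are not both zero, the discrete group `Γ` meets this line in a closed discrete set
of parameters; but one of the sequences `(a / b) ^ n`, `(a / b) ^ (-n)` of parameters is bounded
and without repetitions, a contradiction. So both entries vanish throughout `Γ`, and every `γ ∈ Γ`
acts on the line of transvections `1 + t E₀₁` by `t ↦ λ₁₂(γ) t`. A nontrivial commutator in `Γ` is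
such a transvection, so the same argument makes `λ₁₂(γ)` a root of unity, hence `1`; but then `Γ`
is commutative.
-/

section Rigidity

variable {K : Type*} [NormedField K] [ProperSpace K]

theorem isOfFinOrder_of_forall_zpow_mem {S : Set K} (hclosed : IsClosed S) (hdisc : IsDiscrete S)
    (s : Kˣ) (hs : ∀ n : ℤ, ((s ^ n : Kˣ) : K) ∈ S) : IsOfFinOrder s := by
  wlog hnorm : ‖(s : K)‖ ≤ 1 generalizing s
  · refine isOfFinOrder_inv_iff.1 (this s⁻¹ (fun n => ?_) ?_)
    · simpa only [inv_zpow, ← zpow_neg] using hs (-n)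
    · rw [Units.val_inv_eq_inv_val, norm_inv]
      exact inv_le_one_of_one_le₀ (le_of_not_ge hnorm)
  have hfin : (Metric.closedBall (0 : K) 1 ∩ S).Finite :=
    Metric.finite_isBounded_inter_isClosed hdisc Metric.isBounded_closedBall hclosed
  rw [← finite_powers]
  refine (hfin.preimage Units.val_injective.injOn).subset ?_
  rintro _ ⟨n, rfl⟩
  refine ⟨?_, by simpa using hs n⟩
  simpa using pow_le_one₀ (norm_nonneg (s : K)) hnorm

theorem isOfFinOrder_of_conj_eq {G : Type*} [Group G] [TopologicalSpace G] [IsTopologicalGroup G]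
    [T2Space G] (Γ : Subgroup G) [DiscreteTopology Γ] {φ : K → G} (hcont : Continuous φ)
    (hinj : Function.Injective φ) {g : G} (hg : g ∈ Γ) (hone : φ 1 ∈ Γ) {s : K}
    (hconj : ∀ t, g * φ t * g⁻¹ = φ (s * t)) : IsOfFinOrder s := by
  have hs : s ≠ 0 := by
    rintro rfl
    have hφ : g * φ 1 * g⁻¹ = g * φ 0 * g⁻¹ := by simp only [hconj, zero_mul]
    exact one_ne_zero (hinj (by simpa using hφ))
  lift s to Kˣ using hs.isUnit
  have hzpow : ∀ (n : ℤ) (t : K), g ^ n * φ t * (g ^ n)⁻¹ = φ ((s ^ n : Kˣ) * t) := by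
    have hinv : ∀ t, g⁻¹ * φ t * g = φ ((s⁻¹ : Kˣ) * t) := fun t => by
      simpa [mul_assoc] using congrArg (fun y => g⁻¹ * y * g) (hconj ((s⁻¹ : Kˣ) * t)).symm
    intro n
    induction n with
    | zero => simp
    | succ n ih =>
      intro t
      rw [zpow_add_one, zpow_add_one, Units.val_mul, mul_assoc _ (s : K) t, ← ih, ← hconj]
      group
    | pred n ih =>
      intro t
      rw [zpow_sub_one, zpow_sub_one, Units.val_mul, mul_assoc _ _ t, ← ih, ← hinv]
      group
  have hdisc : IsDiscrete (φ ⁻¹' (Γ : Set G)) :=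
    ⟨DiscreteTopology.preimage_of_continuous_injective _ hcont hinj⟩
  have hclosed : IsClosed (φ ⁻¹' (Γ : Set G)) := Subgroup.isClosed_of_discrete.preimage hcont
  refine Units.isOfFinOrder_val.2 (isOfFinOrder_of_forall_zpow_mem hclosed hdisc s fun n => ?_)
  have hmem := Γ.mul_mem (Γ.mul_mem (Γ.zpow_mem hg n) hone) (Γ.inv_mem (Γ.zpow_mem hg n))
  rwa [hzpow, mul_one] at hmem

end Rigidity

section AffineLine

variable {R : Type*} [Ring R]

/-- The affine line `t ↦ x + t V` through a unit `x`, as a line of units. The condition on `V` says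
that `x⁻¹ V` has square zero, which makes the inverse affine in `t` too. -/
def unitLine {K : Type*} [CommRing K] [Algebra K R] (x : Rˣ) (V : R) (hV : V * ↑x⁻¹ * V = 0)
    (t : K) : Rˣ where
  val := x + t • V
  inv := ↑x⁻¹ - t • (↑x⁻¹ * V * ↑x⁻¹)
  val_inv := by
    have hx : ↑x * (↑x⁻¹ * V * ↑x⁻¹) = V * ↑x⁻¹ := by
      rw [← mul_assoc, Units.mul_inv_cancel_left]
    have hVx : V * (↑x⁻¹ * V * ↑x⁻¹) = 0 := by rw [← mul_assoc, ← mul_assoc, hV, zero_mul]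
    simp [add_mul, mul_sub, hx, hVx]
  inv_val := by
    have hxV : ↑x⁻¹ * V * ↑x⁻¹ * V = 0 := by rw [mul_assoc, mul_assoc, ← mul_assoc V, hV, mul_zero]
    simp [mul_add, sub_mul, hxV]

theorem continuous_unitLine {K : Type*} [CommRing K] [Algebra K R] [TopologicalSpace K]
    [TopologicalSpace R] [IsTopologicalAddGroup R] [ContinuousSMul K R] (x : Rˣ) (V : R)
    (hV : V * ↑x⁻¹ * V = 0) : Continuous (unitLine x V hV : K → Rˣ) :=
  Units.continuous_iff.2
    ⟨continuous_const.add (continuous_id.smul continuous_const),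
      continuous_const.sub (continuous_id.smul continuous_const)⟩

theorem unitLine_injective {K : Type*} [Field K] [Algebra K R] (x : Rˣ) {V : R}
    (hV : V * ↑x⁻¹ * V = 0) (hV0 : V ≠ 0) :
    Function.Injective (unitLine x V hV : K → Rˣ) := fun _ _ h =>
  smul_left_injective K hV0 (add_left_cancel (congrArg Units.val h))

theorem conj_unitLine {K : Type*} [CommRing K] [Algebra K R] {x h : Rˣ} {V : R}
    (hV : V * ↑x⁻¹ * V = 0) {s : K} (hcomm : Commute (h : R) (x - V))
    (heigen : h * V = s • (V * h)) (t : K) :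
    h * unitLine x V hV (t - 1) * h⁻¹ = unitLine x V hV (s * t - 1) := by
  rw [mul_inv_eq_iff_eq_mul, Units.ext_iff]
  have hsplit : ∀ r : K, (unitLine x V hV (r - 1) : R) = (x - V) + r • V := fun r => by
    simp only [unitLine, sub_smul, one_smul]; abel
  rw [Units.val_mul, Units.val_mul, hsplit, hsplit, mul_add, add_mul, hcomm.eq, mul_smul_comm,
    heigen, smul_mul_assoc, smul_smul, mul_comm s t]

theorem isOfFinOrder_of_mul_eq_smul_mul {K : Type*} [NormedField K] [ProperSpace K] [Algebra K R]
    [TopologicalSpace R] [IsTopologicalRing R] [T2Space R] [ContinuousSMul K R]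
    (Γ : Subgroup Rˣ) [DiscreteTopology Γ] {x h : Rˣ} (hx : x ∈ Γ) (hh : h ∈ Γ) {V : R}
    (hV0 : V ≠ 0) (hV : V * ↑x⁻¹ * V = 0) (hcomm : Commute (h : R) (x - V)) {s : K}
    (heigen : h * V = s • (V * h)) : IsOfFinOrder s := by
  have hone : unitLine x V hV ((1 : K) - 1) = x := Units.ext (by simp [unitLine])
  exact isOfFinOrder_of_conj_eq Γ (φ := fun t : K => unitLine x V hV (t - 1))
    ((continuous_unitLine x V hV).comp (continuous_id.sub continuous_const))
    ((unitLine_injective x hV hV0).comp sub_left_injective) hh (by rwa [hone])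
    (conj_unitLine hV hcomm heigen)

end AffineLine

section UpperTriangular

open Matrix commutatorElement

variable {n R : Type*} [Fintype n] [LinearOrder n]

theorem mul_apply_diag_of_isUpperTriangular [NonUnitalNonAssocSemiring R] {A B : Matrix n n R}
    (hA : A.IsUpperTriangular) (hB : B.IsUpperTriangular) (i : n) :
    (A * B) i i = A i i * B i i := by
  rw [mul_apply]
  refine Finset.sum_eq_single i (fun j _ hji => ?_) (fun hi => absurd (Finset.mem_univ i) hi)
  rcases hji.lt_or_gt with hlt | hgt
  · rw [hA hlt, zero_mul]
  · rw [hB hgt, mul_zero]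

variable [CommRing R] {Γ : Subgroup (GL n R)}

/-- The character `γ ↦ γᵢᵢ` of a group of upper triangular matrices. -/
def diagCharacter (hΓ : ∀ γ ∈ Γ, (γ : Matrix n n R).IsUpperTriangular) (i : n) : Γ →* Rˣ :=
  MonoidHom.toHomUnits
    { toFun := fun γ => (γ : GL n R) i i
      map_one' := by simp
      map_mul' := fun α β =>
        mul_apply_diag_of_isUpperTriangular (hΓ α α.2) (hΓ β β.2) i }

theorem apply_diag_ne_zero_of_isUpperTriangular [Nontrivial R]
    (hΓ : ∀ γ ∈ Γ, (γ : Matrix n n R).IsUpperTriangular) {γ : GL n R} (hγ : γ ∈ Γ) (i : n) :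
    γ i i ≠ 0 :=
  (diagCharacter hΓ i ⟨γ, hγ⟩).ne_zero

theorem commutator_apply_diag_of_isUpperTriangular
    (hΓ : ∀ γ ∈ Γ, (γ : Matrix n n R).IsUpperTriangular) {α β : GL n R} (hα : α ∈ Γ) (hβ : β ∈ Γ)
    (i : n) : (⁅α, β⁆ : GL n R) i i = 1 := by
  have hchar : diagCharacter hΓ i ⁅(⟨α, hα⟩ : Γ), ⟨β, hβ⟩⁆ = 1 := by
    rw [map_commutatorElement, commutatorElement_eq_one_iff_commute]
    exact Commute.all _ _
  exact congrArg Units.val hchar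

theorem exists_ne_one_forall_apply_diag_eq_one
    (hΓ : ∀ γ ∈ Γ, (γ : Matrix n n R).IsUpperTriangular)
    (hnoncomm : ¬∀ α ∈ Γ, ∀ β ∈ Γ, α * β = β * α) :
    ∃ u ∈ Γ, u ≠ 1 ∧ ∀ i, u i i = 1 := by
  push Not at hnoncomm
  obtain ⟨α, hα, β, hβ, hαβ⟩ := hnoncomm
  exact ⟨⁅α, β⁆, (⁅(⟨α, hα⟩ : Γ), ⟨β, hβ⟩⁆ : Γ).2,
    commutatorElement_eq_one_iff_mul_comm.not.2 hαβ,
    commutator_apply_diag_of_isUpperTriangular hΓ hα hβ⟩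

theorem commute_of_last_col_eq_zero_of_diag_eq {A B : Matrix (Fin 3) (Fin 3) R}
    (hA : A.IsUpperTriangular) (hB : B.IsUpperTriangular)
    (hAlast : A 0 2 = 0 ∧ A 1 2 = 0) (hBlast : B 0 2 = 0 ∧ B 1 2 = 0)
    (hAdiag : A 0 0 = A 1 1) (hBdiag : B 0 0 = B 1 1) : Commute A B := by
  have hA10 : A 1 0 = 0 := hA (by decide)
  have hA20 : A 2 0 = 0 := hA (by decide)
  have hA21 : A 2 1 = 0 := hA (by decide)
  have hB10 : B 1 0 = 0 := hB (by decide)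
  have hB20 : B 2 0 = 0 := hB (by decide)
  have hB21 : B 2 1 = 0 := hB (by decide)
  ext i j
  fin_cases i <;> fin_cases j <;>
    simp [mul_apply, Fin.sum_univ_three, *] <;> ring

end UpperTriangular

section DiscreteMatrixGroups

open Matrix

variable {K : Type*} [NormedField K] [ProperSpace K]

theorem isOfFinOrder_div_of_transvection_mem {n : Type*} [Fintype n] [DecidableEq n]
    (Γ : Subgroup (GL n K)) [DiscreteTopology Γ] {i j : n} (hij : i ≠ j) {c : K} (hc : c ≠ 0)
    {u g : GL n K} (hu : u ∈ Γ) (hutrans : (u : Matrix n n K) = transvection i j c) (hg : g ∈ Γ)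
    (hcol : ∀ k ≠ i, g k i = 0) (hrow : ∀ k ≠ j, g j k = 0) : IsOfFinOrder (g i i / g j j) := by
  have hgjj : g j j ≠ 0 := fun hzero => g.det_ne_zero <| det_eq_zero_of_row_eq_zero j fun k => by
    rcases eq_or_ne k j with rfl | hkj
    exacts [hzero, hrow k hkj]
  have hsingle : single i j c ≠ 0 := fun h => hc (by simpa using congrFun₂ h i j)
  have hsq : single i j c * single i j c = 0 := single_mul_single_of_ne (h := hij.symm) ..
  have hinv : (↑u⁻¹ : Matrix n n K) * single i j c = single i j c := by
    rw [Units.inv_mul_eq_iff_eq_mul, hutrans, transvection, add_mul, one_mul, hsq, add_zero]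
  have hleft : (g : Matrix n n K) * single i j c = single i j (g i i * c) := by
    ext k l
    rcases eq_or_ne l j with rfl | hl
    · rcases eq_or_ne k i with rfl | hk
      · simp
      · simp [hcol k hk, hk.symm]
    · simp [hl, hl.symm]
  have hright : single i j c * (g : Matrix n n K) = single i j (c * g j j) := by
    ext k l
    rcases eq_or_ne k i with rfl | hk
    · rcases eq_or_ne l j with rfl | hl
      · simp
      · simp [hrow l hl, hl.symm]
    · simp [hk, hk.symm]
  refine isOfFinOrder_of_mul_eq_smul_mul Γ (V := single i j c) hu hg hsingle
    (by rw [mul_assoc, hinv, hsq]) (by simp [hutrans, transvection]) ?_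
  rw [hleft, hright, smul_single, smul_eq_mul]
  congr 1
  field_simp

variable {Γ : Subgroup (GL (Fin 3) K)} [DiscreteTopology Γ]

theorem last_col_eq_zero_of_diagonal_mem
    (hΓ : ∀ γ ∈ Γ, (γ : Matrix (Fin 3) (Fin 3) K).IsUpperTriangular) {h : GL (Fin 3) K}
    (hh : h ∈ Γ) {a b : K} (hdiag : (h : Matrix (Fin 3) (Fin 3) K) = diagonal ![a, a, b])
    (hab : ¬IsOfFinOrder (a / b)) {g : GL (Fin 3) K} (hg : g ∈ Γ) : g 0 2 = 0 ∧ g 1 2 = 0 := by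
  let V : Matrix (Fin 3) (Fin 3) K := !![0, 0, g 0 2; 0, 0, g 1 2; 0, 0, 0]
  have hb : b ≠ 0 := by
    simpa [hdiag] using apply_diag_ne_zero_of_isUpperTriangular hΓ hh 2
  have hV : V * (↑g⁻¹ : Matrix (Fin 3) (Fin 3) K) * V = 0 := by
    have hinv := hΓ g⁻¹ (Γ.inv_mem hg)
    generalize (↑g⁻¹ : Matrix (Fin 3) (Fin 3) K) = M at hinv ⊢
    have h20 : M 2 0 = 0 := hinv (by decide)
    have h21 : M 2 1 = 0 := hinv (by decide)
    ext i j
    simp only [mul_apply, Fin.sum_univ_three]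
    fin_cases i <;> fin_cases j <;> simp [V, h20, h21]
  have hcomm : Commute (h : Matrix (Fin 3) (Fin 3) K) (g - V) := by
    have h20 : g 2 0 = 0 := hΓ g hg (by decide)
    have h21 : g 2 1 = 0 := hΓ g hg (by decide)
    rw [hdiag, commute_iff_eq]
    ext i j
    rw [diagonal_mul, mul_diagonal]
    fin_cases i <;> fin_cases j <;> simp [V, h20, h21, mul_comm]
  have heigen : (h : Matrix (Fin 3) (Fin 3) K) * V = (a / b) • (V * h) := by
    rw [hdiag]
    ext i j
    rw [Matrix.smul_apply, diagonal_mul, mul_diagonal]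
    fin_cases i <;> fin_cases j <;> simp [V] <;> field_simp
  have hV0 : V = 0 := by
    by_contra hV0
    exact hab (isOfFinOrder_of_mul_eq_smul_mul Γ hg hh hV0 hV hcomm heigen)
  exact ⟨by simpa [V] using congrFun₂ hV0 0 2, by simpa [V] using congrFun₂ hV0 1 2⟩

theorem isOfFinOrder_div_of_last_col_eq_zero
    (hΓ : ∀ γ ∈ Γ, (γ : Matrix (Fin 3) (Fin 3) K).IsUpperTriangular)
    (hnoncomm : ¬∀ α ∈ Γ, ∀ β ∈ Γ, α * β = β * α)
    (hlast : ∀ γ ∈ Γ, γ 0 2 = 0 ∧ γ 1 2 = 0) {γ : GL (Fin 3) K} (hγ : γ ∈ Γ) :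
    IsOfFinOrder (γ 0 0 / γ 1 1) := by
  obtain ⟨u, hu, hune, hudiag⟩ := exists_ne_one_forall_apply_diag_eq_one hΓ hnoncomm
  have hutrans : (u : Matrix (Fin 3) (Fin 3) K) = transvection 0 1 (u 0 1) := by
    have hu10 : u 1 0 = 0 := hΓ u hu (by decide)
    have hu20 : u 2 0 = 0 := hΓ u hu (by decide)
    have hu21 : u 2 1 = 0 := hΓ u hu (by decide)
    obtain ⟨hu02, hu12⟩ := hlast u hu
    ext i j
    fin_cases i <;> fin_cases j <;>
      simp [transvection, hudiag, hu10, hu20, hu21, hu02, hu12]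
  have hentry : u 0 1 ≠ 0 := fun hzero =>
    hune (Units.ext (by rw [hutrans, hzero, transvection_zero, Units.val_one]))
  refine isOfFinOrder_div_of_transvection_mem Γ zero_ne_one hentry hu hutrans hγ ?_ ?_
  · intro k hk
    exact hΓ γ hγ (Fin.pos_of_ne_zero hk)
  · intro k hk
    fin_cases k
    exacts [hΓ γ hγ (by decide), absurd rfl hk, (hlast γ hγ).2]

end DiscreteMatrixGroups

theorem stmt_7_general {K : Type*} [NormedField K] [ProperSpace K]
    (Γ : Subgroup (Matrix.GeneralLinearGroup (Fin 3) K)) [DiscreteTopology Γ]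
    (hnoncomm : ¬∀ α ∈ Γ, ∀ β ∈ Γ, α * β = β * α)
    (hupper : ∀ γ ∈ Γ, (γ : Matrix (Fin 3) (Fin 3) K).IsUpperTriangular)
    (htf12 : ∀ γ ∈ Γ, IsOfFinOrder (γ 0 0 / γ 1 1) → γ 0 0 / γ 1 1 = 1)
    {h : Matrix.GeneralLinearGroup (Fin 3) K} (hh : h ∈ Γ) {a b : K}
    (hdiag : (h : Matrix (Fin 3) (Fin 3) K) = Matrix.diagonal ![a, a, b]) :
    IsOfFinOrder (a / b) := by
  by_contra hab
  have hlast : ∀ γ ∈ Γ, γ 0 2 = 0 ∧ γ 1 2 = 0 := fun γ hγ =>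
    last_col_eq_zero_of_diagonal_mem hupper hh hdiag hab hγ
  have hdiag_eq : ∀ γ ∈ Γ, γ 0 0 = γ 1 1 := fun γ hγ =>
    eq_of_div_eq_one <| htf12 γ hγ <|
      isOfFinOrder_div_of_last_col_eq_zero hupper hnoncomm hlast hγ
  exact hnoncomm fun α hα β hβ => Units.ext <|
    commute_of_last_col_eq_zero_of_diag_eq (hupper α hα) (hupper β hβ) (hlast α hα) (hlast β hβ)
      (hdiag_eq α hα) (hdiag_eq β hβ)

/-- A discrete, non-commutative, torsion-free subgroup `Γ ≤ GL(3, ℂ)` of upper triangular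
matrices, such that the multiplicative groups `λ₁₂(Γ)` and `λ₂₃(Γ)` are torsion free,
contains no complex homothety `diag(λ, λ, λ⁻²)` with `|λ| ≠ 1`. -/
theorem stmt_7 (Γ : Subgroup (Matrix.GeneralLinearGroup (Fin 3) ℂ))
    (hdisc : DiscreteTopology Γ)
    (hnoncomm : ¬ ∀ a ∈ Γ, ∀ b ∈ Γ, a * b = b * a)
    (hupper : ∀ γ ∈ Γ, ∀ i j : Fin 3, j < i → (γ : Matrix (Fin 3) (Fin 3) ℂ) i j = 0)
    (htf : ∀ γ ∈ Γ, ∀ n : ℕ, 0 < n → γ ^ n = 1 → γ = 1)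
    (htf12 : ∀ γ ∈ Γ, ∀ n : ℕ, 0 < n →
      ((γ : Matrix (Fin 3) (Fin 3) ℂ) 0 0 / (γ : Matrix (Fin 3) (Fin 3) ℂ) 1 1) ^ n = 1 →
      (γ : Matrix (Fin 3) (Fin 3) ℂ) 0 0 / (γ : Matrix (Fin 3) (Fin 3) ℂ) 1 1 = 1)
    (htf23 : ∀ γ ∈ Γ, ∀ n : ℕ, 0 < n →
      ((γ : Matrix (Fin 3) (Fin 3) ℂ) 1 1 / (γ : Matrix (Fin 3) (Fin 3) ℂ) 2 2) ^ n = 1 →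
      (γ : Matrix (Fin 3) (Fin 3) ℂ) 1 1 / (γ : Matrix (Fin 3) (Fin 3) ℂ) 2 2 = 1) :
    ¬ ∃ γ ∈ Γ, ∃ lam : ℂ, lam ≠ 0 ∧ ‖lam‖ ≠ 1 ∧
      (γ : Matrix (Fin 3) (Fin 3) ℂ) = Matrix.diagonal ![lam, lam, lam⁻¹ ^ 2] := by
  rintro ⟨γ, hγ, lam, -, hnorm, hdiag⟩
  have hroot : IsOfFinOrder (lam / lam⁻¹ ^ 2) :=
    stmt_7_general Γ hnoncomm (fun γ hγ i j hij => hupper γ hγ i j hij)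
      (fun γ hγ hfin =>
        let ⟨n, hn, hpow⟩ := isOfFinOrder_iff_pow_eq_one.1 hfin
        htf12 γ hγ n hn hpow) hγ hdiag
  have hcube : ‖lam‖ ^ 3 = 1 := by
    simpa [pow_succ, div_eq_mul_inv, ← mul_assoc] using hroot.norm_eq_one
  exact hnorm ((pow_eq_one_iff_of_nonneg (norm_nonneg lam) three_ne_zero).1 hcube)
end

section
/- Let W be a discrete additive subgroup of ℂ and let μ : (W,+) → (ℂ∖{0}, ·) be a group homomorphism. Then Γ_{W,μ} is a discrete subgroup of SL(3,ℂ). -/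
noncomputable instance : TopologicalSpace (Matrix.SpecialLinearGroup (Fin 3) ℂ) :=
  inferInstanceAs (TopologicalSpace {A : Matrix (Fin 3) (Fin 3) ℂ // A.det = 1})

/-! The parameter `w` can be read off from `M_w` as the quotient of its entries `w * μ w` and `μ w`,
and this quotient depends continuously on the matrix because `μ w ≠ 0`. So `w ↦ M_w` has a
continuous left inverse on its image, which is discrete because its source `W` is. -/

open Set

lemma isDiscrete_of_continuousOn_of_injOn {X Y : Type*} [TopologicalSpace X] [TopologicalSpace Y]
    {f : X → Y} {s : Set X} {t : Set Y} (ht : IsDiscrete t) (hf : ContinuousOn f s)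
    (hinj : InjOn f s) (hst : MapsTo f s t) : IsDiscrete s := by
  have := ht.to_subtype
  exact ⟨.of_continuous_injective (hf.mapsToRestrict hst) (hst.restrict_inj.mpr hinj)⟩

lemma isDiscrete_image_of_leftInvOn {X Y : Type*} [TopologicalSpace X] [TopologicalSpace Y]
    {f : X → Y} {g : Y → X} {s : Set X} (hs : IsDiscrete s) (hg : ContinuousOn g (f '' s))
    (hgf : LeftInvOn g f s) : IsDiscrete (f '' s) :=
  isDiscrete_of_continuousOn_of_injOn hs hg (LeftInvOn.injOn hgf.rightInvOn_image)
    (hgf.mapsTo (surjOn_image f s))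

lemma isDiscrete_image_of_entry_eq_mul_entry {m n K : Type*} [GroupWithZero K] [TopologicalSpace K]
    [ContinuousMul K] [ContinuousInv₀ K] {F : K → Matrix m n K} {s : Set K} (hs : IsDiscrete s)
    {i k : m} {j l : n} (hne : ∀ w ∈ s, F w k l ≠ 0) (hmul : ∀ w ∈ s, F w i j = w * F w k l) :
    IsDiscrete (F '' s) := by
  refine isDiscrete_image_of_leftInvOn (g := fun A ↦ A i j / A k l) hs ?_ fun w hw ↦ ?_
  · exact (continuous_id.matrix_elem i j).continuousOn.div
      (continuous_id.matrix_elem k l).continuousOn (forall_mem_image.mpr hne)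
  · exact (div_eq_iff (hne w hw)).mpr (hmul w hw)

theorem stmt_9_general {K : Type*} [Field K] [TopologicalSpace K] [ContinuousMul K]
    [ContinuousInv₀ K] {W : Set K} (hW : IsDiscrete W) {μ : K → K} (hμ : ∀ w ∈ W, μ w ≠ 0) :
    IsDiscrete {g : Matrix.SpecialLinearGroup (Fin 3) K | ∃ w ∈ W, (g : Matrix (Fin 3) (Fin 3) K) =
      !![(μ w)⁻¹ ^ 2, 0, 0; 0, μ w, w * μ w; 0, 0, μ w]} := by
  let M (w : K) : Matrix (Fin 3) (Fin 3) K := !![(μ w)⁻¹ ^ 2, 0, 0; 0, μ w, w * μ w; 0, 0, μ w]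
  have hM : IsDiscrete (M '' W) :=
    isDiscrete_image_of_entry_eq_mul_entry (i := 1) (j := 2) (k := 2) (l := 2) hW hμ fun _ _ ↦ rfl
  refine (hM.preimage continuous_subtype_val.continuousOn Subtype.val_injective).mono ?_
  rintro g ⟨w, hw, hg⟩
  exact ⟨w, hw, hg.symm⟩

/-- If `W` is a discrete additive subgroup of `ℂ` and `μ : (W, +) → (ℂ∖{0}, ·)` is a group
homomorphism, then the group `Γ_{W,μ}` of matrices with rows `(μ(w)⁻², 0, 0)`,
`(0, μ(w), w·μ(w))`, `(0, 0, μ(w))`, for `w ∈ W`, is a discrete subgroup of `SL(3, ℂ)`. -/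
theorem stmt_9 (W : AddSubgroup ℂ) (hWdisc : DiscreteTopology W)
    (μ : ℂ → ℂ) (hμ0 : ∀ w ∈ W, μ w ≠ 0)
    (hμmul : ∀ v ∈ W, ∀ w ∈ W, μ (v + w) = μ v * μ w)
    (Γ : Subgroup (Matrix.SpecialLinearGroup (Fin 3) ℂ))
    (hΓ : ∀ g : Matrix.SpecialLinearGroup (Fin 3) ℂ, g ∈ Γ ↔
      ∃ w ∈ W, (g : Matrix (Fin 3) (Fin 3) ℂ) =
        !![(μ w)⁻¹ ^ 2, 0, 0; 0, μ w, w * μ w; 0, 0, μ w]) :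
    DiscreteTopology Γ :=
  -- The topology declared above on `SL(3, ℂ)` unfolds to Mathlib's, used in `stmt_9_general`.
  ((stmt_9_general (SetLike.isDiscrete_iff_discreteTopology.mpr hWdisc) hμ0).mono
    fun g hg ↦ (hΓ g).mp hg).to_subtype
end

section
/- Let W be an additive subgroup of ℂ and let μ : (W,+) → (ℂ∖{0}, ·) be a group homomorphism. The group Γ_{W,μ} is a discrete subgroup of SL(3,ℂ) if and only if both of the following hold: (1) the rank of W is at most 3, i.e. W contains no four elements that are linearly independent over ℤ; and (2) condition (C): for every sequence (w_k) of pairwise distinct elements of W with w_k → 0, no subsequence of (μ(w_k)) converges in ℂ to a nonzero limit. -/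
/-!
Everything is read off from the filters at the identity. The matrix `M_w` tends to `1` exactly when
`w → 0` and `μ w → 1`, so `Γ` is discrete if and only if no nonzero `w` has `(w, μ w)` arbitrarily
close to `(0, 1)`. Differences of consecutive terms of a sequence violating (C) would be such `w`.
Conversely, since bounded sequences of scalars have convergent subsequences, (C) even excludes
nonzero `w` with `(w, ‖μ w‖)` arbitrarily close to `(0, 1)`. The elements `(w, log ‖μ w‖)` then form
a discrete subgroup of `𝕜 × ℝ`, and this bounds the rank of `W` by `dim 𝕜 + 1`.
-/

open Filter Topology Module

section DiscreteSubgroup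

@[to_additive]
theorem discreteTopology_iff_eventually_comap_nhds_one {G ι : Type*} [Group G] [TopologicalSpace G]
    [IsTopologicalGroup G] {H : Subgroup G} {f : ι → G} (hf : Set.range f = H) :
    DiscreteTopology H ↔ ∀ᶠ i in comap f (𝓝 1), f i = 1 := by
  have hH (g : G) : (∀ x : H, (x : G) = g → x = 1) ↔ ∀ i, f i = g → f i = 1 := by
    have hmem (x : G) : x ∈ H ↔ ∃ i, f i = x := by rw [← SetLike.mem_coe, ← hf, Set.mem_range]
    simp only [Subtype.forall, hmem, ← OneMemClass.coe_eq_one]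
    grind
  rw [discreteTopology_iff_isOpen_singleton_one, isOpen_singleton_iff_nhds_eq_pure,
    ← (pure_le_nhds _).ge_iff_eq', le_pure_iff, ← eventually_mem_set, nhds_induced,
    eventually_comap, eventually_comap]
  exact eventually_congr (.of_forall hH)

theorem card_le_finrank_of_linearIndependent_int {V ι : Type*} [NormedAddCommGroup V]
    [NormedSpace ℝ V] [FiniteDimensional ℝ V] [Fintype ι] {Λ : AddSubgroup V} [DiscreteTopology Λ]
    {v : ι → V} (hvΛ : ∀ i, v i ∈ Λ) (hv : LinearIndependent ℤ v) :
    Fintype.card ι ≤ finrank ℝ V := by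
  have hspan : Submodule.span ℤ (Set.range v) ≤ Λ.toIntSubmodule :=
    Submodule.span_le.2 (Set.range_subset_iff.2 hvΛ)
  have hdisc : DiscreteTopology (Submodule.span ℤ (Set.range v)) :=
    DiscreteTopology.of_subset (s := (Λ : Set V)) ‹_› hspan
  calc Fintype.card ι = Set.finrank ℤ (Set.range v) := (finrank_span_eq_card hv).symm
    _ = Set.finrank ℝ (Set.range v) := (Real.finrank_eq_int_finrank_of_discrete hdisc).symm
    _ ≤ finrank ℝ V := Submodule.finrank_le _

end DiscreteSubgroup

section ConditionC

theorem exists_strictMono_injective_comp_of_tendsto {X : Type*} [MetricSpace X] {u : ℕ → X} {x : X}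
    (hux : ∀ n, u n ≠ x) (hu : Tendsto u atTop (𝓝 x)) :
    ∃ φ : ℕ → ℕ, StrictMono φ ∧ Function.Injective (u ∘ φ) := by
  have hdist : Tendsto (fun n => dist (u n) x) atTop (𝓝[>] 0) :=
    tendsto_nhdsWithin_iff.2 ⟨tendsto_iff_dist_tendsto_zero.1 hu, .of_forall fun n =>
      dist_pos.2 (hux n)⟩
  obtain ⟨φ, hφ, hinv⟩ := strictMono_subseq_of_tendsto_atTop hdist.inv_tendsto_nhdsGT_zero
  exact ⟨φ, hφ, hinv.injective.of_comp (f := fun y => (dist y x)⁻¹)⟩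

/-- Condition (C) for a character `μ`: no sequence of distinct group elements tending to `0` has
images under `μ` converging to a nonzero limit. Subsequences need not be mentioned, as they are
again sequences of this kind. -/
def ConditionC {A 𝕜 : Type*} [AddMonoid A] [TopologicalSpace A] [MonoidWithZero 𝕜]
    [TopologicalSpace 𝕜] (μ : AddChar A 𝕜) : Prop :=
  ∀ w : ℕ → A, Function.Injective w → Tendsto w atTop (𝓝 0) →
    ∀ c ≠ 0, ¬ Tendsto (fun k => μ (w k)) atTop (𝓝 c)

theorem conditionC_iff_forall_subseq {E 𝕜 : Type*} [AddGroup E] [TopologicalSpace E]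
    [MonoidWithZero 𝕜] [TopologicalSpace 𝕜] {W : AddSubgroup E} {μ : AddChar W 𝕜} {f : E → 𝕜}
    (hf : ∀ w : W, μ w = f w) :
    ConditionC μ ↔ ∀ w : ℕ → E, (∀ k, w k ∈ W) → Function.Injective w → Tendsto w atTop (𝓝 0) →
      ∀ φ : ℕ → ℕ, StrictMono φ → ∀ c : 𝕜, c ≠ 0 →
        ¬ Tendsto (fun k => f (w (φ k))) atTop (𝓝 c) := by
  constructor
  · intro hC w hwW hinj hw φ hφ c hc
    lift w to ℕ → W using hwW
    simpa only [hf, Function.comp_apply] using hC (w ∘ φ) (hinj.of_comp.comp hφ.injective)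
      ((tendsto_subtype_rng.2 hw).comp hφ.tendsto_atTop) c hc
  · intro hC w hinj hw c hc
    simpa only [hf, id] using hC (fun k => w k) (fun k => (w k).2)
      (Subtype.val_injective.comp hinj) (tendsto_subtype_rng.1 hw) id strictMono_id c hc

theorem ConditionC.of_eventually_eq_zero {A 𝕜 : Type*} [AddCommGroup A] [TopologicalSpace A]
    [ContinuousSub A] [Field 𝕜] [TopologicalSpace 𝕜] [ContinuousMul 𝕜] [ContinuousInv₀ 𝕜]
    {μ : AddChar A 𝕜} (h : ∀ᶠ w in 𝓝 0 ⊓ comap μ (𝓝 1), w = 0) : ConditionC μ := by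
  intro w hinj hw c hc hlim
  have hsub : Tendsto (fun k => w (k + 1) - w k) atTop (𝓝 0) := by
    simpa using (hw.comp (tendsto_add_atTop_nat 1)).sub hw
  have hμsub : Tendsto (fun k => μ (w (k + 1) - w k)) atTop (𝓝 1) := by
    simp only [AddChar.map_sub_eq_div, ← div_self hc]
    exact (hlim.comp (tendsto_add_atTop_nat 1)).div hlim hc
  obtain ⟨k, hk⟩ := ((tendsto_inf.2 ⟨hsub, tendsto_comap_iff.2 hμsub⟩).eventually h).exists
  exact k.succ_ne_self (hinj (sub_eq_zero.1 hk))

theorem ConditionC.eventually_eq_zero {A 𝕜 : Type*} [NormedAddCommGroup A] [NormedField 𝕜]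
    [ProperSpace 𝕜] {μ : AddChar A 𝕜} (hC : ConditionC μ) :
    ∀ᶠ w in 𝓝 0 ⊓ comap (fun w => ‖μ w‖) (𝓝 1), w = 0 := by
  by_contra hfreq
  obtain ⟨w, hlim, hw0⟩ := exists_seq_forall_of_frequently (not_eventually.1 hfreq)
  have hw : Tendsto w atTop (𝓝 0) := (tendsto_inf.1 hlim).1
  have hnorm : Tendsto (fun n => ‖μ (w n)‖) atTop (𝓝 1) :=
    (tendsto_comap (f := fun a => ‖μ a‖)).comp (tendsto_inf.1 hlim).2
  obtain ⟨φ, hφ, hinj⟩ := exists_strictMono_injective_comp_of_tendsto hw0 hw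
  have hnormφ := hnorm.comp hφ.tendsto_atTop
  have hbounded : ∀ᶠ n in atTop, μ (w (φ n)) ∈ Metric.closedBall 0 2 := by
    filter_upwards [hnormφ.eventually_le_const one_lt_two] with n hn
    exact mem_closedBall_zero_iff.2 hn
  obtain ⟨c, -, ψ, hψ, hc⟩ :=
    tendsto_subseq_of_frequently_bounded Metric.isBounded_closedBall hbounded.frequently
  have hc_norm : ‖c‖ = 1 := tendsto_nhds_unique hc.norm (hnormφ.comp hψ.tendsto_atTop)
  exact hC (w ∘ φ ∘ ψ) (hinj.comp hψ.injective) (hw.comp (hφ.comp hψ).tendsto_atTop) c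
    (norm_ne_zero_iff.1 (hc_norm ▸ one_ne_zero)) hc

theorem conditionC_iff_eventually_eq_zero {A 𝕜 : Type*} [NormedAddCommGroup A] [NormedField 𝕜]
    [ProperSpace 𝕜] {μ : AddChar A 𝕜} :
    ConditionC μ ↔ ∀ᶠ w in 𝓝 0 ⊓ comap μ (𝓝 1), w = 0 := by
  refine ⟨fun hC => hC.eventually_eq_zero.filter_mono ?_, ConditionC.of_eventually_eq_zero⟩
  have hnorm : Tendsto (fun w => ‖μ w‖) (comap μ (𝓝 1)) (𝓝 1) := by
    simpa using (tendsto_comap (f := μ) (x := 𝓝 1)).norm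
  exact inf_le_inf_left _ hnorm.le_comap

end ConditionC

section Rank

variable {E 𝕜 : Type*} [NormedAddCommGroup E] [NormedField 𝕜] {W : AddSubgroup E}

/-- The homomorphism `w ↦ (w, log ‖μ w‖)` from `W` to `E × ℝ`, which linearizes the character `μ`
up to the compact group of scalars of norm `1`. -/
noncomputable def logGraph (μ : AddChar W 𝕜) : W →+ E × ℝ :=
  W.subtype.prod <| AddMonoidHom.mk' (fun w => Real.log ‖μ w‖) fun v w => by
    rw [μ.map_add_eq_mul, norm_mul, Real.log_mul] <;>
      exact norm_ne_zero_iff.2 (μ.val_isUnit _).ne_zero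

theorem comap_logGraph_nhds_zero_le (μ : AddChar W 𝕜) :
    comap (logGraph μ) (𝓝 0) ≤ 𝓝 0 ⊓ comap (fun w => ‖μ w‖) (𝓝 1) := by
  have hlim : Tendsto (logGraph μ) (comap (logGraph μ) (𝓝 0)) (𝓝 0) := tendsto_comap
  have hfst : Tendsto (fun w : W => (w : E)) (comap (logGraph μ) (𝓝 0)) (𝓝 0) := hlim.fst_nhds
  have hlog : Tendsto (fun w => Real.log ‖μ w‖) (comap (logGraph μ) (𝓝 0)) (𝓝 0) := hlim.snd_nhds
  have hexp := hlog.rexp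
  simp only [Real.exp_log (norm_pos_iff.2 (μ.val_isUnit _).ne_zero), Real.exp_zero] at hexp
  exact le_inf (tendsto_id'.1 (tendsto_subtype_rng.2 hfst)) hexp.le_comap

theorem discreteTopology_range_logGraph {μ : AddChar W 𝕜}
    (h : ∀ᶠ w in 𝓝 0 ⊓ comap (fun w => ‖μ w‖) (𝓝 1), w = 0) :
    DiscreteTopology (logGraph μ).range := by
  rw [discreteTopology_iff_eventually_comap_nhds_zero (logGraph μ).coe_range.symm]
  filter_upwards [h.filter_mono (comap_logGraph_nhds_zero_le μ)] with w hw
  rw [hw, map_zero]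

theorem ConditionC.card_le_finrank_add_one [NormedSpace ℝ E] [FiniteDimensional ℝ E] [ProperSpace 𝕜]
    {μ : AddChar W 𝕜} (hC : ConditionC μ) {ι : Type*} [Fintype ι] {v : ι → E}
    (hvW : ∀ i, v i ∈ W) (hv : LinearIndependent ℤ v) : Fintype.card ι ≤ finrank ℝ E + 1 := by
  have hdisc := discreteTopology_range_logGraph hC.eventually_eq_zero
  have hlift : LinearIndependent ℤ fun i => logGraph μ ⟨v i, hvW i⟩ :=
    hv.of_comp (AddMonoidHom.fst E ℝ).toIntLinearMap
  simpa using
    card_le_finrank_of_linearIndependent_int (fun i => AddMonoidHom.mem_range.2 ⟨_, rfl⟩) hlift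

end Rank

section CharMatrix

variable {𝕜 : Type*} [Field 𝕜] {W : AddSubgroup 𝕜}

/-- The matrix `M_w` in `SL(3, 𝕜)` attached to a character `μ` of an additive subgroup `W` of `𝕜`;
the group `Γ_{W,μ}` is the range of this map. -/
def charMatrix (μ : AddChar W 𝕜) (w : W) : Matrix.SpecialLinearGroup (Fin 3) 𝕜 :=
  ⟨!![(μ w)⁻¹ ^ 2, 0, 0; 0, μ w, w * μ w; 0, 0, μ w], by
    have hμ : μ w ≠ 0 := (μ.val_isUnit w).ne_zero
    simp [Matrix.det_fin_three]
    field_simp⟩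

theorem charMatrix_eq_one_iff {μ : AddChar W 𝕜} {w : W} : charMatrix μ w = 1 ↔ w = 0 := by
  constructor
  · intro h
    have hentry : (w : 𝕜) * μ w = 0 :=
      congrArg (fun g : Matrix.SpecialLinearGroup (Fin 3) 𝕜 => g 1 2) h
    exact Subtype.ext ((mul_eq_zero_iff_right (μ.val_isUnit w).ne_zero).1 hentry)
  · rintro rfl
    ext i j
    fin_cases i <;> fin_cases j <;> simp [charMatrix]

variable [TopologicalSpace 𝕜]

theorem tendsto_charMatrix_nhds_one_iff [ContinuousMul 𝕜] [ContinuousInv₀ 𝕜] {μ : AddChar W 𝕜}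
    {l : Filter W} :
    Tendsto (charMatrix μ) l (𝓝 1) ↔ Tendsto id l (𝓝 0) ∧ Tendsto μ l (𝓝 1) := by
  have hentries : Tendsto (charMatrix μ) l (𝓝 1) ↔
      ∀ i j, Tendsto (fun w => charMatrix μ w i j) l
        (𝓝 ((1 : Matrix.SpecialLinearGroup (Fin 3) 𝕜) i j)) :=
    tendsto_subtype_rng.trans (tendsto_pi_nhds.trans (forall_congr' fun _ => tendsto_pi_nhds))
  rw [hentries]
  constructor
  · intro h
    have hμ : Tendsto μ l (𝓝 1) := h 1 1
    have hmul : Tendsto (fun w : W => (w : 𝕜) * μ w) l (𝓝 0) := h 1 2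
    have hid : Tendsto (fun w : W => (w : 𝕜)) l (𝓝 0) := by
      refine (zero_div (1 : 𝕜) ▸ hmul.div hμ one_ne_zero).congr fun w => ?_
      exact mul_div_cancel_right₀ _ (μ.val_isUnit w).ne_zero
    exact ⟨tendsto_subtype_rng.2 hid, hμ⟩
  · rintro ⟨hid, hμ⟩ i j
    have hinv : Tendsto (fun w => (μ w)⁻¹ ^ 2) l (𝓝 1) := by
      simpa using (hμ.inv₀ one_ne_zero).pow 2
    have hmul : Tendsto (fun w : W => (w : 𝕜) * μ w) l (𝓝 0) := by
      simpa using (tendsto_subtype_rng.1 hid).mul hμ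
    fin_cases i <;> fin_cases j <;> first
      | exact hinv
      | exact hμ
      | exact hmul
      | exact tendsto_const_nhds

theorem comap_charMatrix_nhds_one [ContinuousMul 𝕜] [ContinuousInv₀ 𝕜] (μ : AddChar W 𝕜) :
    comap (charMatrix μ) (𝓝 1) = 𝓝 0 ⊓ comap μ (𝓝 1) :=
  eq_of_forall_le_iff fun l => by
    rw [← tendsto_iff_comap, tendsto_charMatrix_nhds_one_iff, le_inf_iff, ← tendsto_iff_comap,
      tendsto_id']

theorem discreteTopology_iff_eventually_eq_zero_of_range_charMatrix [IsTopologicalRing 𝕜]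
    [ContinuousInv₀ 𝕜] {μ : AddChar W 𝕜} {Γ : Subgroup (Matrix.SpecialLinearGroup (Fin 3) 𝕜)}
    (hΓ : Set.range (charMatrix μ) = Γ) :
    DiscreteTopology Γ ↔ ∀ᶠ w in 𝓝 0 ⊓ comap μ (𝓝 1), w = 0 := by
  simp only [discreteTopology_iff_eventually_comap_nhds_one hΓ, charMatrix_eq_one_iff,
    comap_charMatrix_nhds_one]

end CharMatrix

/-- The character given by a multiplicative function on an additive monoid that does not vanish
at `0`. -/
def addCharOfMapAdd {A M : Type*} [AddMonoid A] [MonoidWithZero M] [IsLeftCancelMulZero M]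
    (f : A → M) (h0 : f 0 ≠ 0) (hadd : ∀ a b, f (a + b) = f a * f b) : AddChar A M where
  toFun := f
  map_zero_eq_one' := (mul_eq_left₀ h0).1 (by rw [← hadd, add_zero])
  map_add_eq_mul' := hadd

theorem stmt_10_general {𝕜 : Type*} [NormedField 𝕜] [NormedSpace ℝ 𝕜] [FiniteDimensional ℝ 𝕜]
    (W : AddSubgroup 𝕜) (μ : 𝕜 → 𝕜) (hμ0 : ∀ w ∈ W, μ w ≠ 0)
    (hμmul : ∀ v ∈ W, ∀ w ∈ W, μ (v + w) = μ v * μ w)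
    (Γ : Subgroup (Matrix.SpecialLinearGroup (Fin 3) 𝕜))
    (hΓ : ∀ g : Matrix.SpecialLinearGroup (Fin 3) 𝕜, g ∈ Γ ↔
      ∃ w ∈ W, (g : Matrix (Fin 3) (Fin 3) 𝕜) =
        !![(μ w)⁻¹ ^ 2, 0, 0; 0, μ w, w * μ w; 0, 0, μ w]) :
    DiscreteTopology Γ ↔
      ((¬ ∃ v : Fin (finrank ℝ 𝕜 + 2) → 𝕜, (∀ i, v i ∈ W) ∧ LinearIndependent ℤ v) ∧
        (∀ w : ℕ → 𝕜, (∀ k, w k ∈ W) → Function.Injective w → Tendsto w atTop (𝓝 0) →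
          ∀ φ : ℕ → ℕ, StrictMono φ → ∀ c : 𝕜, c ≠ 0 →
            ¬ Tendsto (fun k => μ (w (φ k))) atTop (𝓝 c))) := by
  let χ : AddChar W 𝕜 := addCharOfMapAdd (fun w => μ w) (hμ0 0 W.zero_mem)
    fun v w => hμmul v v.2 w w.2
  have hrange : Set.range (charMatrix χ) = Γ := by
    ext g
    simp only [SetLike.mem_coe, hΓ, Set.mem_range, Subtype.exists, ← exists_prop]
    exact exists_congr fun w => exists_congr fun hw => Subtype.ext_iff.trans eq_comm
  rw [discreteTopology_iff_eventually_eq_zero_of_range_charMatrix hrange,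
    ← conditionC_iff_eventually_eq_zero, ← conditionC_iff_forall_subseq (μ := χ) fun _ => rfl,
    iff_and_self]
  rintro hC ⟨v, hvW, hv⟩
  simpa using hC.card_le_finrank_add_one hvW hv

/-- `Γ_{W,μ}` is a discrete subgroup of `SL(3, ℂ)` if and only if (1) `W` has rank at most
`3`, i.e. `W` contains no four elements that are `ℤ`-linearly independent, and (2) for every
sequence of pairwise distinct elements of `W` tending to `0`, no subsequence of its image
under `μ` converges in `ℂ` to a nonzero limit. -/
theorem stmt_10 (W : AddSubgroup ℂ)
    (μ : ℂ → ℂ) (hμ0 : ∀ w ∈ W, μ w ≠ 0)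
    (hμmul : ∀ v ∈ W, ∀ w ∈ W, μ (v + w) = μ v * μ w)
    (Γ : Subgroup (Matrix.SpecialLinearGroup (Fin 3) ℂ))
    (hΓ : ∀ g : Matrix.SpecialLinearGroup (Fin 3) ℂ, g ∈ Γ ↔
      ∃ w ∈ W, (g : Matrix (Fin 3) (Fin 3) ℂ) =
        !![(μ w)⁻¹ ^ 2, 0, 0; 0, μ w, w * μ w; 0, 0, μ w]) :
    DiscreteTopology Γ ↔
      ((¬ ∃ v : Fin 4 → ℂ, (∀ i, v i ∈ W) ∧ LinearIndependent ℤ v) ∧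
        (∀ w : ℕ → ℂ, (∀ k, w k ∈ W) → Function.Injective w →
          Filter.Tendsto w Filter.atTop (nhds 0) →
          ∀ φ : ℕ → ℕ, StrictMono φ → ∀ c : ℂ, c ≠ 0 →
            ¬ Filter.Tendsto (fun k => μ (w (φ k))) Filter.atTop (nhds c))) := by
  have h := stmt_10_general W μ hμ0 hμmul Γ hΓ
  rwa [Complex.finrank_real_complex] at h
end

section
/- Let (x₁,y₁), (x₂,y₂) ∈ ℂ², not both zero, and suppose W = ℤ(x₁,y₁) + ℤ(x₂,y₂) is a discrete additive subgroup of ℂ². Let Γ ≤ GL(3,ℂ) be the subgroup of all matrices with rows (1, x, y), (0, 1, 0), (0, 0, 1) for (x,y) ∈ W. Then there exists A ∈ GL(3,ℂ) such that A Γ A⁻¹ is one of the following groups: (i) the group generated by u₁₂(1) and u₁₃(1); (ii) the group generated by u₁₃(1) and u₁₃(y) for some y ∈ ℂ∖ℝ; (iii) the group generated by u₁₂(1) and u₁₂(x) for some x ∈ ℂ∖ℝ; (iv) the group generated by u₁₂(1); (v) the group generated by u₁₃(1). Here u₁₂(t) denotes the matrix with rows (1, t, 0), (0,1,0), (0,0,1)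 and u₁₃(t) the matrix with rows (1, 0, t), (0,1,0), (0,0,1). -/
/-!
Writing `u v` for the unipotent matrix with first row `(1, v)`, conjugation by `1 ⊕ M` sends `u v`
to `u (v M⁻¹)`, so only the `GL₂(ℂ)`-orbit of `W` matters. If the two generators of `W` are linearly
independent over `ℂ`, they can be moved to the standard basis. If they are proportional with a
non-real ratio `c`, they can be moved to `(1, 0)` and `(c, 0)`. Otherwise `W` is a discrete subgroup
of a real line, hence infinite cyclic, and its generator can be moved to `(1, 0)`.
-/

section LinearAlgebra

theorem linearMap_prod_apply_eq_smul_add_smul {R M : Type*} [Semiring R] [AddCommMonoid M]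
    [Module R M] (f : R × R →ₗ[R] M) (v : R × R) : f v = v.1 • f (1, 0) + v.2 • f (0, 1) := by
  rw [← map_smul, ← map_smul, ← map_add]
  simp

variable {K V : Type*} [DivisionRing K] [AddCommGroup V] [Module K V]

theorem exists_linearEquiv_prod_of_linearIndependent (hV : Module.finrank K V = 2) {v w : V}
    (h : LinearIndependent K ![v, w]) : ∃ e : V ≃ₗ[K] K × K, e v = (1, 0) ∧ e w = (0, 1) := by
  let b := basisOfLinearIndependentOfCardEqFinrank h (by simp [hV])
  have hb : ⇑b = ![v, w] := by simp [b]
  have hv : b 0 = v := by simp [hb]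
  have hw : b 1 = w := by simp [hb]
  refine ⟨b.equivFun ≪≫ₗ LinearEquiv.finTwoArrow K K, ?_, ?_⟩
  · simp [← hv]
  · simp [← hw]

theorem exists_linearEquiv_prod_of_ne_zero (hV : Module.finrank K V = 2) {v : V} (hv : v ≠ 0) :
    ∃ e : V ≃ₗ[K] K × K, e v = (1, 0) := by
  obtain ⟨w, hvw⟩ := exists_linearIndependent_pair_of_one_lt_finrank (R := K) (by omega) hv
  obtain ⟨e, hev, -⟩ := exists_linearEquiv_prod_of_linearIndependent hV hvw
  exact ⟨e, hev⟩

end LinearAlgebra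

section MatrixGroups

variable {R : Type*} [CommRing R]

/-- The homomorphism sending `(x, y)` to the unipotent matrix with first row `(1, x, y)` and the
other two rows those of the identity; the additive group `R × R` is written multiplicatively. -/
def rowUnipotent : Multiplicative (R × R) →* GL (Fin 3) R :=
  MonoidHom.toHomUnits
    { toFun v := !![1, v.toAdd.1, v.toAdd.2; 0, 1, 0; 0, 0, 1]
      map_one' := by simp [Matrix.one_fin_three]
      map_mul' v w := by simp [add_comm] }

theorem coe_rowUnipotent (v : Multiplicative (R × R)) :
    (rowUnipotent v : Matrix (Fin 3) (Fin 3) R) =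
      !![1, v.toAdd.1, v.toAdd.2; 0, 1, 0; 0, 0, 1] := rfl

/-- The group of the matrices with first row `(1, x, y)` for `(x, y)` in `W` and the other two rows
those of the identity; it is the group `Γ` of the theorem. -/
def rowUnipotentSubgroup (W : AddSubgroup (R × R)) : Subgroup (GL (Fin 3) R) :=
  W.toSubgroup.map rowUnipotent

theorem mem_rowUnipotentSubgroup {W : AddSubgroup (R × R)} {g : GL (Fin 3) R} :
    g ∈ rowUnipotentSubgroup W ↔
      ∃ x y, (x, y) ∈ W ∧ (g : Matrix (Fin 3) (Fin 3) R) = !![1, x, y; 0, 1, 0; 0, 0, 1] := by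
  constructor
  · rintro ⟨v, hv, rfl⟩
    exact ⟨v.toAdd.1, v.toAdd.2, hv, rfl⟩
  · rintro ⟨x, y, hxy, hg⟩
    exact ⟨.ofAdd (x, y), hxy, Units.ext hg.symm⟩

/-- The block matrix `1 ⊕ M`, where `M` is the matrix of `e⁻¹` acting on row vectors; conjugating by
it applies `e` to the first row of a `rowUnipotent`. Using the inverse makes this a homomorphism
rather than an antihomomorphism. -/
def oneBlock : ((R × R) ≃ₗ[R] R × R) →* GL (Fin 3) R :=
  MonoidHom.toHomUnits
    { toFun e := !![1, 0, 0;
                    0, (e.symm (1, 0)).1, (e.symm (1, 0)).2;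
                    0, (e.symm (0, 1)).1, (e.symm (0, 1)).2]
      map_one' := by simp [Matrix.one_fin_three, LinearEquiv.one_eq_refl]
      map_mul' e f := by
        have mul_symm_apply (v : R × R) : (e * f).symm v =
            (e.symm v).1 • f.symm (1, 0) + (e.symm v).2 • f.symm (0, 1) :=
          linearMap_prod_apply_eq_smul_add_smul f.symm.toLinearMap (e.symm v)
        simp [mul_symm_apply] }

theorem coe_oneBlock (e : (R × R) ≃ₗ[R] R × R) :
    (oneBlock e : Matrix (Fin 3) (Fin 3) R) =
      !![1, 0, 0;
         0, (e.symm (1, 0)).1, (e.symm (1, 0)).2;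
         0, (e.symm (0, 1)).1, (e.symm (0, 1)).2] := rfl

theorem oneBlock_conj_rowUnipotent (e : (R × R) ≃ₗ[R] R × R) (v : R × R) :
    oneBlock e * rowUnipotent (.ofAdd v) * (oneBlock e)⁻¹ = rowUnipotent (.ofAdd (e v)) := by
  have hv : (e v).1 • e.symm (1, 0) + (e v).2 • e.symm (0, 1) = v := by
    simpa using (linearMap_prod_apply_eq_smul_add_smul e.symm.toLinearMap (e v)).symm
  obtain ⟨hv₁, hv₂⟩ := Prod.ext_iff.mp hv
  simp only [Prod.fst_add, Prod.snd_add, Prod.smul_fst, Prod.smul_snd, smul_eq_mul] at hv₁ hv₂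
  rw [mul_inv_eq_iff_eq_mul]
  apply Units.ext
  simp [coe_oneBlock, coe_rowUnipotent, hv₁, hv₂]

theorem map_conj_rowUnipotentSubgroup_closure (e : (R × R) ≃ₗ[R] R × R) (S : Set (R × R)) :
    (rowUnipotentSubgroup (AddSubgroup.closure S)).map (MulAut.conj (oneBlock e)).toMonoidHom =
      Subgroup.closure ((fun v ↦ rowUnipotent (.ofAdd (e v))) '' S) := by
  rw [rowUnipotentSubgroup, AddSubgroup.toSubgroup_closure, MonoidHom.map_closure,
    MonoidHom.map_closure, ← Multiplicative.toAdd.image_symm_eq_preimage]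
  simp [Set.image_image, oneBlock_conj_rowUnipotent]

end MatrixGroups

section DiscreteSubgroups

variable {V : Type*} [AddCommGroup V] [TopologicalSpace V] [Module ℝ V] [ContinuousSMul ℝ V]

theorem isAddCyclic_of_discrete_of_le_span_singleton {W : AddSubgroup V} [DiscreteTopology W]
    {v : V} (hv : v ≠ 0) (hW : W ≤ (Submodule.span ℝ {v}).toAddSubgroup) : IsAddCyclic W := by
  let f : ℝ →+ V := (LinearMap.toSpanSingleton ℝ V v).toAddMonoidHom
  have f_cont : Continuous f := by
    change Continuous fun t : ℝ ↦ t • v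
    fun_prop
  have : DiscreteTopology (W.comap f) :=
    DiscreteTopology.preimage_of_continuous_injective (W : Set V) f_cont (smul_left_injective ℝ hv)
  have : IsAddCyclic (W.comap f) := AddSubgroup.discrete_iff_addCyclic.mpr this
  refine isAddCyclic_of_surjective (f.addSubgroupComap W) fun ⟨w, hw⟩ ↦ ?_
  obtain ⟨t, rfl⟩ := Submodule.mem_span_singleton.mp (hW hw)
  exact ⟨⟨t, hw⟩, rfl⟩

theorem exists_closure_pair_eq_closure_singleton_of_discrete {v w : V} (hne : ¬(v = 0 ∧ w = 0))
    [DiscreteTopology (AddSubgroup.closure {v, w})] {u : V}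
    (hv : v ∈ Submodule.span ℝ {u}) (hw : w ∈ Submodule.span ℝ {u}) :
    ∃ z ≠ 0, AddSubgroup.closure {v, w} = AddSubgroup.closure {z} := by
  have hu : u ≠ 0 := by
    rintro rfl
    exact hne ⟨by simpa using hv, by simpa using hw⟩
  have hle : AddSubgroup.closure {v, w} ≤ (Submodule.span ℝ {u}).toAddSubgroup := by
    simp [AddSubgroup.closure_le, Set.pair_subset_iff, hv, hw]
  obtain ⟨z, hz⟩ := (AddSubgroup.isAddCyclic_iff_exists_zmultiples_eq_top _).mp
    (isAddCyclic_of_discrete_of_le_span_singleton hu hle)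
  refine ⟨z, ?_, by rw [← hz, AddSubgroup.zmultiples_eq_closure]⟩
  rintro rfl
  rw [AddSubgroup.zmultiples_zero_eq_bot, eq_comm, AddSubgroup.closure_eq_bot_iff,
    Set.pair_subset_iff] at hz
  exact hne hz

theorem linearIndependent_or_nonreal_smul_or_cyclic_of_discrete [Module ℂ V] [IsScalarTower ℝ ℂ V]
    {v w : V} [DiscreteTopology (AddSubgroup.closure {v, w})] (hne : ¬(v = 0 ∧ w = 0)) :
    LinearIndependent ℂ ![v, w] ∨ (v ≠ 0 ∧ ∃ c : ℂ, c.im ≠ 0 ∧ c • v = w) ∨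
      ∃ u ≠ 0, AddSubgroup.closure {v, w} = AddSubgroup.closure {u} := by
  by_cases hv : v = 0
  · exact .inr (.inr (exists_closure_pair_eq_closure_singleton_of_discrete hne (u := w)
      (by simp [hv]) (Submodule.mem_span_singleton_self w)))
  by_cases hindep : LinearIndependent ℂ ![v, w]
  · exact .inl hindep
  obtain ⟨c, hc⟩ : ∃ c : ℂ, c • v = w := by
    simpa [LinearIndependent.pair_iff' hv] using hindep
  by_cases him : c.im = 0
  · have hre : c.re • v = w := by
      rw [← algebraMap_smul ℂ c.re v, ← hc]
      exact congrArg (· • v) (Complex.ext rfl him.symm)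
    exact .inr (.inr (exists_closure_pair_eq_closure_singleton_of_discrete hne
      (Submodule.mem_span_singleton_self v) (Submodule.mem_span_singleton.mpr ⟨c.re, hre⟩)))
  · exact .inr (.inl ⟨hv, c, him, hc⟩)

end DiscreteSubgroups

/-- Classification up to conjugation of the discrete groups of unipotent matrices
`(1, x, y; 0, 1, 0; 0, 0, 1)` with `(x, y)` ranging over a discrete additive subgroup
`W = ℤ(x₁,y₁) + ℤ(x₂,y₂)` of `ℂ²`: each such group is conjugate to one of five models. -/
theorem stmt_14 (x₁ y₁ x₂ y₂ : ℂ)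
    (hne : ¬ ((x₁, y₁) = ((0 : ℂ), (0 : ℂ)) ∧ (x₂, y₂) = ((0 : ℂ), (0 : ℂ))))
    (hWdisc : DiscreteTopology
      (AddSubgroup.closure {((x₁ : ℂ), (y₁ : ℂ)), (x₂, y₂)} : AddSubgroup (ℂ × ℂ)))
    (Γ : Subgroup (Matrix.GeneralLinearGroup (Fin 3) ℂ))
    (hΓ : ∀ g, g ∈ Γ ↔ ∃ x y : ℂ,
      (x, y) ∈ (AddSubgroup.closure {((x₁ : ℂ), (y₁ : ℂ)), (x₂, y₂)} : AddSubgroup (ℂ × ℂ)) ∧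
      (g : Matrix (Fin 3) (Fin 3) ℂ) = !![1, x, y; 0, 1, 0; 0, 0, 1]) :
    ∃ A : Matrix.GeneralLinearGroup (Fin 3) ℂ,
      (∃ g h : Matrix.GeneralLinearGroup (Fin 3) ℂ,
        (g : Matrix (Fin 3) (Fin 3) ℂ) = !![1, 1, 0; 0, 1, 0; 0, 0, 1] ∧
        (h : Matrix (Fin 3) (Fin 3) ℂ) = !![1, 0, 1; 0, 1, 0; 0, 0, 1] ∧
        Subgroup.map (MulAut.conj A).toMonoidHom Γ = Subgroup.closure {g, h}) ∨
      (∃ (g h : Matrix.GeneralLinearGroup (Fin 3) ℂ) (y : ℂ), y.im ≠ 0 ∧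
        (g : Matrix (Fin 3) (Fin 3) ℂ) = !![1, 0, 1; 0, 1, 0; 0, 0, 1] ∧
        (h : Matrix (Fin 3) (Fin 3) ℂ) = !![1, 0, y; 0, 1, 0; 0, 0, 1] ∧
        Subgroup.map (MulAut.conj A).toMonoidHom Γ = Subgroup.closure {g, h}) ∨
      (∃ (g h : Matrix.GeneralLinearGroup (Fin 3) ℂ) (x : ℂ), x.im ≠ 0 ∧
        (g : Matrix (Fin 3) (Fin 3) ℂ) = !![1, 1, 0; 0, 1, 0; 0, 0, 1] ∧
        (h : Matrix (Fin 3) (Fin 3) ℂ) = !![1, x, 0; 0, 1, 0; 0, 0, 1] ∧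
        Subgroup.map (MulAut.conj A).toMonoidHom Γ = Subgroup.closure {g, h}) ∨
      (∃ g : Matrix.GeneralLinearGroup (Fin 3) ℂ,
        (g : Matrix (Fin 3) (Fin 3) ℂ) = !![1, 1, 0; 0, 1, 0; 0, 0, 1] ∧
        Subgroup.map (MulAut.conj A).toMonoidHom Γ = Subgroup.closure {g}) ∨
      (∃ g : Matrix.GeneralLinearGroup (Fin 3) ℂ,
        (g : Matrix (Fin 3) (Fin 3) ℂ) = !![1, 0, 1; 0, 1, 0; 0, 0, 1] ∧
        Subgroup.map (MulAut.conj A).toMonoidHom Γ = Subgroup.closure {g}) := by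
  obtain rfl : Γ = rowUnipotentSubgroup (AddSubgroup.closure {(x₁, y₁), (x₂, y₂)}) :=
    Subgroup.ext fun g ↦ (hΓ g).trans mem_rowUnipotentSubgroup.symm
  have hrank : Module.finrank ℂ (ℂ × ℂ) = 2 := by simp
  rcases linearIndependent_or_nonreal_smul_or_cyclic_of_discrete hne with
    hindep | ⟨hv, c, hc, hcv⟩ | ⟨u, hu, hW⟩
  · obtain ⟨e, he₁, he₂⟩ := exists_linearEquiv_prod_of_linearIndependent hrank hindep
    refine ⟨oneBlock e, .inl ⟨rowUnipotent (.ofAdd (1, 0)), rowUnipotent (.ofAdd (0, 1)),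
      rfl, rfl, ?_⟩⟩
    rw [map_conj_rowUnipotentSubgroup_closure, Set.image_pair, he₁, he₂]
  · obtain ⟨e, he⟩ := exists_linearEquiv_prod_of_ne_zero hrank hv
    have hec : e (x₂, y₂) = (c, 0) := by rw [← hcv, map_smul, he]; simp
    refine ⟨oneBlock e, .inr (.inr (.inl ⟨rowUnipotent (.ofAdd (1, 0)),
      rowUnipotent (.ofAdd (c, 0)), c, hc, rfl, rfl, ?_⟩))⟩
    rw [map_conj_rowUnipotentSubgroup_closure, Set.image_pair, he, hec]
  · obtain ⟨e, he⟩ := exists_linearEquiv_prod_of_ne_zero hrank hu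
    refine ⟨oneBlock e, .inr (.inr (.inr (.inl ⟨rowUnipotent (.ofAdd (1, 0)), rfl, ?_⟩)))⟩
    rw [hW, map_conj_rowUnipotentSubgroup_closure, Set.image_singleton, he]
end

section
/- Let (a_n)_{n≥1} be a nondecreasing sequence of positive real numbers with a_n → ∞, and let δ ≥ 0 be its exponent of convergence, i.e. the series Σ_n e^{−s·a_n} converges for every s > δ and diverges for every s < δ. Then there exists a continuous nondecreasing function h : (0,∞) → (0,∞) such that the series Σ_n e^{−s·a_n}·h(e^{a_n}) converges for every s > δ and diverges for every s ≤ δ. -/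
/-!
Passing to logarithms, we look for `h = exp ∘ φ ∘ log`, where `φ` is continuous and nondecreasing;
the modified series is then `∑ exp (-s * a i + φ (a i))`. Convergence for all `s > δ` only requires
`φ` to be sublinear. For divergence at `δ`, the divergence of the original series at `δ - εₖ`, where
`εₖ ↓ 0`, provides finite sets of indices `Fₖ` with `∑ i ∈ Fₖ, exp (-(δ - εₖ) * a i) ≥ k`, so it is
enough that `φ t ≥ εₖ * t` for all `t` up to `bₖ = max a(Fₖ)`. An infimum of functions
`εⱼ * t⁺ + Cⱼ` does both as soon as the constants `Cⱼ` grow fast enough: for `j ≤ k` the slope `εⱼ`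
already exceeds `εₖ`, and for `j > k` the constant `Cⱼ` exceeds `εₖ * bₖ`.
-/

section LowerEnvelope

open Filter Topology NNReal

lemma lipschitzWith_ciInf {κ α : Type*} [Nonempty κ] [PseudoMetricSpace α] {f : κ → α → ℝ}
    {K : ℝ≥0} (hf : ∀ k, LipschitzWith K (f k))
    (hbdd : ∀ x, BddBelow (Set.range fun k => f k x)) :
    LipschitzWith K fun x => ⨅ k, f k x := by
  refine LipschitzWith.of_le_add_mul K fun x y => ?_
  rw [← sub_le_iff_le_add]
  refine le_ciInf fun k => sub_le_iff_le_add.2 ?_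
  exact (ciInf_le (hbdd x) k).trans ((hf k).le_add_mul x y)

/-- The lower envelope of the functions `t ↦ ε k * t⁺ + C k`. It is used with slopes `ε k` tending
to `0`, which makes it sublinear. The positive part keeps these functions nonnegative, hence the
family bounded below, also for `t < 0`. -/
noncomputable def lowerEnvelope {κ : Type*} (ε C : κ → ℝ) (t : ℝ) : ℝ :=
  ⨅ k, (ε k * t⁺ + C k)

variable {κ : Type*} {ε C : κ → ℝ}

lemma bddBelow_range_mul_posPart_add (hε : 0 ≤ ε) (hC : 0 ≤ C) (t : ℝ) :
    BddBelow (Set.range fun k => ε k * t⁺ + C k) := by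
  refine ⟨0, ?_⟩
  rintro _ ⟨k, rfl⟩
  exact add_nonneg (mul_nonneg (hε k) (posPart_nonneg t)) (hC k)

lemma lowerEnvelope_nonneg (hε : 0 ≤ ε) (hC : 0 ≤ C) (t : ℝ) : 0 ≤ lowerEnvelope ε C t :=
  Real.iInf_nonneg fun k => add_nonneg (mul_nonneg (hε k) (posPart_nonneg t)) (hC k)

lemma lowerEnvelope_le (hε : 0 ≤ ε) (hC : 0 ≤ C) (k : κ) (t : ℝ) :
    lowerEnvelope ε C t ≤ ε k * t⁺ + C k :=
  ciInf_le (bddBelow_range_mul_posPart_add hε hC t) k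

lemma monotone_lowerEnvelope (hε : 0 ≤ ε) (hC : 0 ≤ C) : Monotone (lowerEnvelope ε C) :=
  fun s _ hst => ciInf_mono (bddBelow_range_mul_posPart_add hε hC s) fun k =>
    add_le_add_left (mul_le_mul_of_nonneg_left (posPart_mono hst) (hε k)) (C k)

lemma lipschitzWith_lowerEnvelope [Nonempty κ] (hε : 0 ≤ ε) (hC : 0 ≤ C) {K : ℝ≥0}
    (hK : ∀ k, ε k ≤ K) : LipschitzWith K (lowerEnvelope ε C) := by
  refine lipschitzWith_ciInf (fun k => LipschitzWith.of_le_add_mul K fun s t => ?_)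
    (bddBelow_range_mul_posPart_add hε hC)
  have hpos : s⁺ ≤ t⁺ + dist s t := by
    simpa only [NNReal.coe_one, one_mul] using lipschitzWith_posPart.le_add_mul s t
  calc ε k * s⁺ + C k ≤ ε k * (t⁺ + dist s t) + C k := by gcongr; exact hε k
    _ = ε k * t⁺ + C k + ε k * dist s t := by ring
    _ ≤ ε k * t⁺ + C k + K * dist s t := by gcongr; exact hK k

lemma mul_le_lowerEnvelope [LinearOrder κ] (hε : 0 ≤ ε) (hanti : Antitone ε) (hC : 0 ≤ C)
    {k : κ} {t : ℝ} (ht : ∀ j, k < j → ε k * t ≤ C j) : ε k * t ≤ lowerEnvelope ε C t := by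
  have : Nonempty κ := ⟨k⟩
  refine le_ciInf fun j => ?_
  rcases le_or_gt j k with hjk | hkj
  · calc ε k * t ≤ ε k * t⁺ := mul_le_mul_of_nonneg_left (le_posPart t) (hε k)
      _ ≤ ε j * t⁺ := mul_le_mul_of_nonneg_right (hanti hjk) (posPart_nonneg t)
      _ ≤ ε j * t⁺ + C j := le_add_of_nonneg_right (hC j)
  · exact (ht j hkj).trans (le_add_of_nonneg_left (mul_nonneg (hε j) (posPart_nonneg t)))

lemma exists_sublinear_forall_mul_le {ε : ℕ → ℝ} (hanti : Antitone ε)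
    (hlim : Tendsto ε atTop (𝓝 0)) (b : ℕ → ℝ) :
    ∃ φ : ℝ → ℝ, Continuous φ ∧ Monotone φ ∧ 0 ≤ φ ∧
      (∀ η > 0, ∃ B, ∀ t, φ t ≤ η * t⁺ + B) ∧ ∀ k, ∀ t ≤ b k, ε k * t ≤ φ t := by
  have hε : 0 ≤ ε := fun k => hanti.le_of_tendsto hlim k
  have hterm (i : ℕ) : 0 ≤ ε i * (b i)⁺ := mul_nonneg (hε i) (posPart_nonneg _)
  let C : ℕ → ℝ := fun j => ∑ i ∈ Finset.range j, ε i * (b i)⁺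
  have hC : 0 ≤ C := fun j => Finset.sum_nonneg fun i _ => hterm i
  refine ⟨lowerEnvelope ε C, ?_, monotone_lowerEnvelope hε hC, lowerEnvelope_nonneg hε hC,
    fun η hη => ?_, fun k t ht => ?_⟩
  · exact (lipschitzWith_lowerEnvelope hε hC (K := ⟨ε 0, hε 0⟩)
      fun k => hanti (Nat.zero_le k)).continuous
  · obtain ⟨k, hk⟩ := (hlim.eventually_le_const hη).exists
    exact ⟨C k, fun t => (lowerEnvelope_le hε hC k t).trans
      (add_le_add_left (mul_le_mul_of_nonneg_right hk (posPart_nonneg t)) _)⟩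
  · refine mul_le_lowerEnvelope hε hanti hC fun j hkj => ?_
    calc ε k * t ≤ ε k * (b k)⁺ :=
          mul_le_mul_of_nonneg_left (ht.trans (le_posPart _)) (hε k)
      _ ≤ C j := Finset.single_le_sum (fun i _ => hterm i) (Finset.mem_range.2 hkj)

end LowerEnvelope

lemma not_summable_iff_forall_exists_le_sum {ι : Type*} {f : ι → ℝ} (hf : 0 ≤ f) :
    ¬ Summable f ↔ ∀ c, ∃ F : Finset ι, c ≤ ∑ i ∈ F, f i := by
  refine ⟨fun h c => ?_, fun h hsum => ?_⟩
  · by_contra! hlt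
    exact h (summable_of_sum_le hf fun F => (hlt F).le)
  · obtain ⟨F, hF⟩ := h (∑' i, f i + 1)
    linarith [hsum.sum_le_tsum F fun i _ => hf i]

section DirichletSeries

variable {ι : Type*} {a : ι → ℝ} {δ : ℝ} {φ : ℝ → ℝ}

lemma summable_exp_mul_exp_of_sublinear
    (hconv : ∀ s, δ < s → Summable fun i => Real.exp (-s * a i))
    (hφ : ∀ η > 0, ∃ B, ∀ t, φ t ≤ η * t⁺ + B) {s : ℝ} (hs : δ < s) :
    Summable fun i => Real.exp (-s * a i) * Real.exp (φ (a i)) := by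
  obtain ⟨r, hδr, hrs⟩ := exists_between hs
  obtain ⟨B, hB⟩ := hφ (s - r) (sub_pos.2 hrs)
  refine Summable.of_nonneg_of_le (fun i => by positivity) (fun i => ?_)
    (((hconv r hδr).add (hconv s hs)).mul_right (Real.exp B))
  have hexp : Real.exp (-s * a i) * Real.exp ((s - r) * (a i)⁺) ≤
      Real.exp (-r * a i) + Real.exp (-s * a i) := by
    rw [← Real.exp_add]
    rcases le_total 0 (a i) with hi | hi
    · rw [posPart_of_nonneg hi, ← add_mul, show -s + (s - r) = -r by ring]
      exact le_add_of_nonneg_right (Real.exp_nonneg _)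
    · rw [posPart_of_nonpos hi, mul_zero, add_zero]
      exact le_add_of_nonneg_left (Real.exp_nonneg _)
  calc Real.exp (-s * a i) * Real.exp (φ (a i))
      ≤ Real.exp (-s * a i) * Real.exp ((s - r) * (a i)⁺ + B) := by gcongr; exact hB _
    _ = Real.exp (-s * a i) * Real.exp ((s - r) * (a i)⁺) * Real.exp B := by
        rw [Real.exp_add, mul_assoc]
    _ ≤ (Real.exp (-r * a i) + Real.exp (-s * a i)) * Real.exp B := by gcongr

lemma not_summable_exp_mul_exp_of_nonneg {s : ℝ}
    (hdiv : ¬ Summable fun i => Real.exp (-s * a i)) (hφ : 0 ≤ φ) :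
    ¬ Summable fun i => Real.exp (-s * a i) * Real.exp (φ (a i)) :=
  fun hsum => hdiv <| hsum.of_nonneg_of_le (fun _ => Real.exp_nonneg _) fun i =>
    le_mul_of_one_le_right (Real.exp_nonneg _) (Real.one_le_exp (hφ (a i)))

lemma not_summable_exp_mul_exp_of_mul_le {ε : ℕ → ℝ} {F : ℕ → Finset ι}
    (hF : ∀ k : ℕ, (k : ℝ) ≤ ∑ i ∈ F k, Real.exp (-(δ - ε k) * a i))
    (hφ : ∀ k, ∀ i ∈ F k, ε k * a i ≤ φ (a i)) :
    ¬ Summable fun i => Real.exp (-δ * a i) * Real.exp (φ (a i)) := by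
  refine (not_summable_iff_forall_exists_le_sum fun i => by positivity).2 fun c => ?_
  obtain ⟨k, hk⟩ := exists_nat_ge c
  refine ⟨F k, (hk.trans (hF k)).trans (Finset.sum_le_sum fun i hi => ?_)⟩
  rw [← Real.exp_add, Real.exp_le_exp]
  linarith [hφ k i hi]

lemma exists_sublinear_not_summable (hdiv : ∀ s < δ, ¬ Summable fun i => Real.exp (-s * a i)) :
    ∃ φ : ℝ → ℝ, Continuous φ ∧ Monotone φ ∧ 0 ≤ φ ∧
      (∀ η > 0, ∃ B, ∀ t, φ t ≤ η * t⁺ + B) ∧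
      ¬ Summable fun i => Real.exp (-δ * a i) * Real.exp (φ (a i)) := by
  let ε : ℕ → ℝ := fun k => 1 / ((k : ℝ) + 1)
  have hpartial (k : ℕ) : ∃ F : Finset ι, (k : ℝ) ≤ ∑ i ∈ F, Real.exp (-(δ - ε k) * a i) :=
    (not_summable_iff_forall_exists_le_sum fun i => Real.exp_nonneg _).1
      (hdiv _ (sub_lt_self δ Nat.one_div_pos_of_nat)) k
  choose F hF using hpartial
  choose b hb using fun k => ((F k).image a).exists_le
  obtain ⟨φ, hcont, hmono, hnonneg, hsub, hle⟩ := exists_sublinear_forall_mul_le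
    (ε := ε) (fun _ _ => Nat.one_div_le_one_div) tendsto_one_div_add_atTop_nhds_zero_nat b
  exact ⟨φ, hcont, hmono, hnonneg, hsub, not_summable_exp_mul_exp_of_mul_le hF fun k i hi =>
    hle k (a i) (hb k (a i) (Finset.mem_image_of_mem a hi))⟩

end DirichletSeries

theorem stmt_16_general {ι : Type*} (a : ι → ℝ) (δ : ℝ)
    (hconv : ∀ s : ℝ, δ < s → Summable (fun i => Real.exp (-s * a i)))
    (hdiv : ∀ s : ℝ, s < δ → ¬ Summable (fun i => Real.exp (-s * a i))) :
    ∃ h : ℝ → ℝ,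
      ContinuousOn h (Set.Ioi 0) ∧
      MonotoneOn h (Set.Ioi 0) ∧
      (∀ x ∈ Set.Ioi (0 : ℝ), 0 < h x) ∧
      (∀ s : ℝ, δ < s → Summable (fun i => Real.exp (-s * a i) * h (Real.exp (a i)))) ∧
      (∀ s : ℝ, s ≤ δ → ¬ Summable (fun i => Real.exp (-s * a i) * h (Real.exp (a i)))) := by
  obtain ⟨φ, hcont, hmono, hnonneg, hsub, hdivδ⟩ := exists_sublinear_not_summable hdiv
  refine ⟨fun x => Real.exp (φ (Real.log x)), ?_, ?_, fun x _ => Real.exp_pos _, ?_, ?_⟩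
  · exact (Real.continuous_exp.comp hcont).comp_continuousOn
      (Real.continuousOn_log.mono fun x hx => ne_of_gt hx)
  · exact (Real.exp_monotone.comp hmono).comp_monotoneOn Real.strictMonoOn_log.monotoneOn
  · intro s hs
    simpa only [Real.log_exp] using summable_exp_mul_exp_of_sublinear hconv hsub hs
  · intro s hs
    simp only [Real.log_exp]
    rcases hs.lt_or_eq with hlt | rfl
    · exact not_summable_exp_mul_exp_of_nonneg (hdiv s hlt) hnonneg
    · exact hdivδ

/-- Patterson's modification lemma: if `(a n)` is a nondecreasing sequence of positive
reals tending to `∞` whose Dirichlet series `Σ e^{-s·aₙ}` has exponent of convergence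
`δ ≥ 0`, then there is a continuous nondecreasing `h : (0,∞) → (0,∞)` such that
`Σ e^{-s·aₙ}·h(e^{aₙ})` converges for `s > δ` and diverges for `s ≤ δ`. -/
theorem stmt_16 (a : ℕ → ℝ) (ha_pos : ∀ n, 0 < a n) (ha_mono : Monotone a)
    (ha_top : Filter.Tendsto a Filter.atTop Filter.atTop)
    (δ : ℝ) (hδ : 0 ≤ δ)
    (hconv : ∀ s : ℝ, δ < s → Summable (fun n => Real.exp (-s * a n)))
    (hdiv : ∀ s : ℝ, s < δ → ¬ Summable (fun n => Real.exp (-s * a n))) :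
    ∃ h : ℝ → ℝ,
      ContinuousOn h (Set.Ioi 0) ∧
      MonotoneOn h (Set.Ioi 0) ∧
      (∀ x ∈ Set.Ioi (0 : ℝ), 0 < h x) ∧
      (∀ s : ℝ, δ < s → Summable (fun n => Real.exp (-s * a n) * h (Real.exp (a n)))) ∧
      (∀ s : ℝ, s ≤ δ → ¬ Summable (fun n => Real.exp (-s * a n) * h (Real.exp (a n)))) :=
  stmt_16_general a δ hconv hdiv
end
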